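/- arXiv:0802.0405 — 3 statements merged into one kernel-verified Lean document; each statement's English description precedes it below -/
import Mathlib

section
/- Let (W,S) be a Coxeter system and suppose W acts geometrically on a CAT(0) space X with fixed basepoint x₀ such that |∂X| > 2 and there exists a constant N > 0 with the following two properties (which hold when X is the Davis complex of (W,S) with x₀ the identity vertex and N the diameter of its fundamental chamber): (i) for every α ∈ ∂X there exists a sequence (s_i) ⊂ S such that each word s₁s₂⋯s_i is reduced and d(s₁⋯s_i · x₀, Im ξ_{x₀,α}) ≤ N for every i; (ii) for all x, y ∈ W, if o(st) = ∞ for every s ∈ S(x) and every t ∈ S(y⁻¹), then d(x·x₀, [x₀, (xy)·x₀]) ≤ N, where [x₀, (xy)·x₀] denotes the geodesic segment from x₀ to (xy)·x₀. Suppose moreover that there exist s₀, t₀ ∈ S and a number K > 0 such that (1) o(s₀t₀) = ∞, and (2) for each w, v ∈ W there exists x ∈ W with ℓ(x) ≤ K and wx, vx ∈ W^{{s₀}}. Then the boundary ∂X is a scrambled set. -/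
/-!
The upper limit is a matter of CAT(0) geometry. Move along the ray `ξ` from `x₀` to `α` and
compare, at the point `ξ t`, the continuation of `ξ` with the ray `η` to `β`. If the two stayed
`C`-close up to a time `R`, the distance to a far point of `η` would decrease at rate at least
`1 - C / R` along `ξ` on `[t, t + R]`, hence by convexity on `[0, t]`; the law of cosines
inequality then bounds `d(ξ r, ξ_{x₀,β} r)²` by `2 r² C / R` (`CAT0.small_angle`). For `R` large
this contradicts `α ≠ β`. So the two rays separate by time `R`, with `R` independent of `t`.
Cocompactness gives `g` with `g x₀` close to `ξ t`, and `g⁻¹` then keeps `α` and `β` apart by at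
least `2⁻ᴿ` (`limsup_bdist_pos`).

For the lower limit, choose `wᵢ`, `vᵢ` whose orbit points follow the rays to `α` and `β`. As only
finitely many `x` have length at most `K`, one `x` gives `x⁻¹ wᵢ` and `x⁻¹ vᵢ` the left
descent set `{s₀}` for infinitely many `i`. Every right descent `a` of `h = (s₀ t₀)^n` satisfies
`o(a s₀) = ∞`, so the geodesics from `x₀` to `h x⁻¹ wᵢ x₀` and to `h x⁻¹ vᵢ x₀` pass near `h x₀`.
In the limit the rays from `x₀` to `h x⁻¹ α` and `h x⁻¹ β` both pass near `h x₀`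
(`CAT0.ray_near`). Since `d(x₀, h x₀) → ∞` as `n → ∞`, these rays agree more and more on bounded
time intervals, and the boundary distance tends to `0` (`liminf_bdist_eq_zero`).

The statement on descents comes from the action of `W` on `W × ZMod 2` in which a simple
reflection `s` sends `(t, ε)` to `(s t s, ε + [t = s])`. The sign change of `w` at `t` is the parity
of the number of occurrences of `t` in the right inversion sequence of any word for `w`. For
`w = (s₀ t₀)^n` these inversions are the `(t₀ s₀)^k t₀`, so a right descent `a` has this form and
`a s₀ = (t₀ s₀)^(k+1)` has infinite order (`orderOf_descent_dihedral`).
-/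


/-- `γ` parametrizes a geodesic segment from `x` to `y` by arc length:
it is an isometric embedding of `[0, dist x y]` with `γ 0 = x` and `γ (dist x y) = y`. -/
def IsGeodesicFrom {X : Type*} [MetricSpace X] (γ : ℝ → X) (x y : X) : Prop :=
  γ 0 = x ∧ γ (dist x y) = y ∧
    ∀ s ∈ Set.Icc (0 : ℝ) (dist x y), ∀ t ∈ Set.Icc (0 : ℝ) (dist x y),
      dist (γ s) (γ t) = |s - t|

/-- A geodesic space: every pair of points is joined by a geodesic. -/
def GeodesicSpace (X : Type*) [MetricSpace X] : Prop :=
  ∀ x y : X, ∃ γ : ℝ → X, IsGeodesicFrom γ x y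

/-- The comparison point in the Euclidean plane: the point at arc-length parameter `s`
on the segment from `p` to `q`, where `D` is the length of that segment. -/
noncomputable def cmpPt (p q : EuclideanSpace ℝ (Fin 2)) (D s : ℝ) :
    EuclideanSpace ℝ (Fin 2) :=
  p + (s / D) • (q - p)

/-- A CAT(0) space: a geodesic space in which every geodesic triangle satisfies the
CAT(0) comparison inequality with respect to a comparison triangle in the Euclidean
plane `ℝ²` with the same side lengths. -/
def CAT0 (X : Type*) [MetricSpace X] : Prop :=
  GeodesicSpace X ∧
    ∀ (p q r : X) (γ γ' : ℝ → X), IsGeodesicFrom γ p q → IsGeodesicFrom γ' p r →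
      ∀ pc qc rc : EuclideanSpace ℝ (Fin 2),
        dist pc qc = dist p q → dist pc rc = dist p r → dist qc rc = dist q r →
        ∀ s ∈ Set.Icc (0 : ℝ) (dist p q), ∀ t ∈ Set.Icc (0 : ℝ) (dist p r),
          dist (γ s) (γ' t) ≤ dist (cmpPt pc qc (dist p q) s) (cmpPt pc rc (dist p r) t)

/-- A geodesic ray: an isometric embedding of `[0, ∞)`. -/
def IsGeodesicRay {X : Type*} [MetricSpace X] (ξ : ℝ → X) : Prop :=
  ∀ s ∈ Set.Ici (0 : ℝ), ∀ t ∈ Set.Ici (0 : ℝ), dist (ξ s) (ξ t) = |s - t|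

/-- Two rays are asymptotic if they are at bounded distance from each other. -/
def Asymptotic {X : Type*} [MetricSpace X] (ξ ζ : ℝ → X) : Prop :=
  ∃ C : ℝ, ∀ t ≥ (0 : ℝ), dist (ξ t) (ζ t) ≤ C

/-- The action of `G` on `X` is by isometries. -/
def IsometricAction (G X : Type*) [Group G] [MetricSpace X] [MulAction G X] : Prop :=
  ∀ (g : G) (x y : X), dist (g • x) (g • y) = dist x y

/-- The action of `G` on `X` is (metrically) proper. -/
def ProperAction (G X : Type*) [Group G] [MetricSpace X] [MulAction G X] : Prop :=
  ∀ (x : X) (R : ℝ), {g : G | dist x (g • x) ≤ R}.Finite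

/-- The action of `G` on `X` is cocompact: some (hence any) orbit is coarsely dense. -/
def CocompactAction (G X : Type*) [Group G] [MetricSpace X] [MulAction G X] : Prop :=
  ∀ x : X, ∃ R > (0 : ℝ), ∀ y : X, ∃ g : G, dist y (g • x) ≤ R

/-- A geometric action: proper and cocompact, by isometries. -/
def GeometricAction (G X : Type*) [Group G] [MetricSpace X] [MulAction G X] : Prop :=
  IsometricAction G X ∧ ProperAction G X ∧ CocompactAction G X

/-- A bundled presentation of the boundary `∂X` of a proper CAT(0) space `X`,
together with the induced action of `G`.  The type `Bd` plays the role of `∂X`: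
`ray x α` is the unique geodesic ray issuing from `x` in the asymptotic class `α`,
every geodesic ray is asymptotic to exactly one such ray, and the `G`-action on `Bd`
is the one induced by the action on rays, `g • [ξ] = [g ∘ ξ]`. -/
structure BoundaryStruct (G X Bd : Type*) [Group G] [MetricSpace X]
    [MulAction G X] [MulAction G Bd] where
  ray : X → Bd → ℝ → X
  isRay : ∀ (x : X) (α : Bd), IsGeodesicRay (ray x α)
  ray_start : ∀ (x : X) (α : Bd), ray x α 0 = x
  ray_asymp : ∀ (x y : X) (α : Bd), Asymptotic (ray x α) (ray y α)
  ray_inj : ∀ (x : X) (α β : Bd), Asymptotic (ray x α) (ray x β) → α = β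
  ray_surj : ∀ ξ : ℝ → X, IsGeodesicRay ξ → ∃ α : Bd, Asymptotic ξ (ray (ξ 0) α)
  equivariant : ∀ (g : G) (x : X) (α : Bd) (t : ℝ), g • ray x α t = ray (g • x) (g • α) t

/-- The metric `d_{∂X}` on the boundary with respect to the basepoint `x₀`:
`d_{∂X}(α,β) = Σ_{i=1}^∞ min { d(ξ_{x₀,α}(i), ξ_{x₀,β}(i)), 2⁻ⁱ }`. -/
noncomputable def bdist {G X Bd : Type*} [Group G] [MetricSpace X]
    [MulAction G X] [MulAction G Bd] (B : BoundaryStruct G X Bd) (x₀ : X)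
    (α β : Bd) : ℝ :=
  ∑' i : ℕ, min (dist (B.ray x₀ α (i + 1)) (B.ray x₀ β (i + 1))) ((1 : ℝ) / 2 ^ (i + 1))

/-- The boundary is a scrambled set: for all distinct `α, β ∈ ∂X`,
`limsup { d_{∂X}(gα, gβ) : g ∈ G } > 0` and `liminf { d_{∂X}(gα, gβ) : g ∈ G } = 0`
(limit superior/inferior being taken along the cofinite filter on `G`). -/
def IsScrambled {G X Bd : Type*} [Group G] [MetricSpace X]
    [MulAction G X] [MulAction G Bd] (B : BoundaryStruct G X Bd) (x₀ : X) : Prop :=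
  ∀ α β : Bd, α ≠ β →
    0 < Filter.limsup (fun g : G => bdist B x₀ (g • α) (g • β)) Filter.cofinite ∧
    Filter.liminf (fun g : G => bdist B x₀ (g • α) (g • β)) Filter.cofinite = 0

/-- The boundary has more than two points. -/
def MoreThanTwo (Bd : Type*) : Prop :=
  ∃ a b c : Bd, a ≠ b ∧ a ≠ c ∧ b ≠ c

/-- The (right) descent set `S(w) = { s ∈ S : ℓ(ws) < ℓ(w) }` of `w`. -/
def descentSet {B W : Type*} [Group W] {M : CoxeterMatrix B}
    (cs : CoxeterSystem M W) (w : W) : Set B :=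
  {i : B | cs.IsRightDescent w i}

/-- A Coxeter matrix is right-angled if `m(s,t) ∈ {2, ∞}` for all `s ≠ t`
(`∞` being encoded as `0`). -/
def CoxeterMatrix.RightAngled {B : Type*} (M : CoxeterMatrix B) : Prop :=
  ∀ i j : B, i ≠ j → M.M i j = 2 ∨ M.M i j = 0

/-- A Coxeter system `(W,S)` is irreducible if there is no nonempty proper subset
`T ⊆ S` such that `W` decomposes as the direct product of the parabolic subgroups
`W_T` and `W_{S∖T}`. -/
def CoxeterSystem.Irreducible {B W : Type*} [Group W] {M : CoxeterMatrix B}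
    (cs : CoxeterSystem M W) : Prop :=
  ¬ ∃ T : Set B, T.Nonempty ∧ T ≠ Set.univ ∧
    (∀ g ∈ Subgroup.closure (cs.simple '' T),
      ∀ h ∈ Subgroup.closure (cs.simple '' Tᶜ), Commute g h) ∧
    Subgroup.closure (cs.simple '' T) ⊓ Subgroup.closure (cs.simple '' Tᶜ) = ⊥ ∧
    Subgroup.closure (cs.simple '' T) ⊔ Subgroup.closure (cs.simple '' Tᶜ) = ⊤

/-! ### Sign representation of a Coxeter group -/

section Coxeter

variable {B W : Type*} [Group W] {M : CoxeterMatrix B} (cs : CoxeterSystem M W)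

open Classical in
/-- The transformation `(t, ε) ↦ (s t s, ε + [t = s])` of `W × ZMod 2` attached to `s = s_i`. -/
noncomputable def signMap (i : B) : Function.End (W × ZMod 2) := fun p =>
  (cs.simple i * p.1 * cs.simple i, p.2 + if p.1 = cs.simple i then 1 else 0)

open Classical in
/-- The second coordinate counts how often `t` occurs among the `2p` conjugates
`(s_j s_i)^k s_j` attached to the letters of the word `(s_i s_j)^p`. -/
lemma signMap_mul_pow (i j : B) (p : ℕ) (t : W) (e : ZMod 2) :
    ((signMap cs i * signMap cs j) ^ p) (t, e) =
      ((cs.simple i * cs.simple j) ^ p * t * ((cs.simple i * cs.simple j) ^ p)⁻¹,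
        e + ∑ k ∈ Finset.range (2 * p),
          if t = (cs.simple j * cs.simple i) ^ k * cs.simple j then 1 else 0) := by
  induction p generalizing t e with
  | zero => simp; rfl
  | succ p ih =>
    have key : ∀ k : ℕ, (cs.simple i * cs.simple j * t * cs.simple j * cs.simple i =
        (cs.simple j * cs.simple i) ^ k * cs.simple j) ↔
        t = (cs.simple j * cs.simple i) ^ (k + 1 + 1) * cs.simple j := by
      intro k
      have e1 : (cs.simple j * cs.simple i) ^ (k + 1 + 1) * cs.simple j =
          (cs.simple i * cs.simple j)⁻¹ * ((cs.simple j * cs.simple i) ^ k * cs.simple j) *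
            (cs.simple j * cs.simple i)⁻¹ := by
        rw [pow_succ, pow_succ']
        simp only [mul_inv_rev, cs.inv_simple, mul_assoc]
      rw [e1, eq_mul_inv_iff_mul_eq, eq_inv_mul_iff_mul_eq]
      simp only [mul_assoc]
    have step : (signMap cs i * signMap cs j) (t, e) =
        (cs.simple i * cs.simple j * t * cs.simple j * cs.simple i,
          e + ((if t = (cs.simple j * cs.simple i) ^ 1 * cs.simple j then 1 else 0) +
            (if t = (cs.simple j * cs.simple i) ^ 0 * cs.simple j then 1 else 0))) := by
      have c1 : (cs.simple j * t * cs.simple j = cs.simple i) ↔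
          t = (cs.simple j * cs.simple i) ^ 1 * cs.simple j := by
        constructor
        · intro h; rw [← h]; simp [mul_assoc]
        · rintro rfl; simp [mul_assoc]
      change signMap cs i (signMap cs j (t, e)) = _
      simp only [signMap, c1, pow_zero, one_mul, Prod.mk.injEq]
      refine ⟨by simp only [mul_assoc], by ring⟩
    rw [pow_succ]
    change ((signMap cs i * signMap cs j) ^ p) ((signMap cs i * signMap cs j) (t, e)) = _
    rw [step, ih, show 2 * (p + 1) = 2 * p + 1 + 1 by ring, Finset.sum_range_succ',
      Finset.sum_range_succ']
    simp only [key, Prod.mk.injEq]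
    refine ⟨?_, by ring⟩
    rw [pow_succ]
    simp only [mul_inv_rev, cs.inv_simple, mul_assoc]

lemma signMap_isLiftable : M.IsLiftable (signMap cs) := by
  classical
  intro i j
  funext ⟨t, e⟩
  rw [signMap_mul_pow]
  have h1 := cs.simple_mul_simple_pow i j
  have h2 := cs.simple_mul_simple_pow' i j
  -- The conjugates repeat with period `m`, so each is counted twice.
  rw [h1, two_mul, Finset.sum_range_add]
  simp only [pow_add, h2, one_mul, mul_one, inv_one]
  rw [CharTwo.add_self_eq_zero, add_zero]
  rfl

/-- The action of `W` on `W × ZMod 2` extending `signMap`. -/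
noncomputable def signRep : W →* Function.End (W × ZMod 2) :=
  cs.lift ⟨signMap cs, signMap_isLiftable cs⟩

lemma signRep_simple (i : B) : signRep cs (cs.simple i) = signMap cs i :=
  cs.lift_apply_simple (signMap_isLiftable cs) i

lemma signRep_wordProd (ω : List B) (t : W) (e : ZMod 2) (ht : t ∉ cs.rightInvSeq ω) :
    signRep cs (cs.wordProd ω) (t, e) = (cs.wordProd ω * t * (cs.wordProd ω)⁻¹, e) := by
  induction ω with
  | nil => simp; rfl
  | cons i ω ih =>
    rw [CoxeterSystem.rightInvSeq, List.mem_cons, not_or] at ht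
    rw [cs.wordProd_cons, map_mul]
    change signRep cs (cs.simple i) (signRep cs (cs.wordProd ω) (t, e)) = _
    rw [ih ht.2, signRep_simple]
    have : ¬ (cs.wordProd ω * t * (cs.wordProd ω)⁻¹ = cs.simple i) := by
      intro h
      apply ht.1
      rw [← h]
      group
    simp only [signMap]
    rw [if_neg this, add_zero]
    simp only [mul_inv_rev, cs.inv_simple, mul_assoc]

/-- The right descents of `(s_i s_j)^n` are among the reflections `(s_j s_i)^k s_j`. -/
lemma rightDescent_dihedral (i j a : B) (n : ℕ)
    (h : cs.IsRightDescent ((cs.simple i * cs.simple j) ^ n) a) :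
    ∃ k : ℕ, cs.simple a = (cs.simple j * cs.simple i) ^ k * cs.simple j := by
  classical
  by_contra! hne
  set w := (cs.simple i * cs.simple j) ^ n with hw
  obtain ⟨ω, hω, hωw⟩ := cs.exists_isReduced (w * cs.simple a)
  have h1 : ∀ e, (signRep cs w (cs.simple a, e)).2 = e := by
    intro e
    rw [hw, map_pow, map_mul, signRep_simple, signRep_simple, signMap_mul_pow]
    simp [hne]
  have h2 : (signRep cs (w * cs.simple a) (cs.simple a, 0)).2 = 1 := by
    rw [map_mul]
    change (signRep cs w (signRep cs (cs.simple a) (cs.simple a, 0))).2 = 1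
    rw [signRep_simple]
    simp [signMap, h1]
  -- The sign change forces `s_a` to be a right inversion of `w s_a`.
  have h3 : cs.simple a ∈ cs.rightInvSeq ω := by
    by_contra hmem
    rw [hωw, signRep_wordProd cs ω _ _ hmem] at h2
    exact zero_ne_one h2
  have h4 := (cs.isRightInversion_of_mem_rightInvSeq hω h3).2
  rw [← hωw, cs.simple_mul_simple_cancel_right] at h4
  exact absurd h (not_lt.2 h4.le)

lemma orderOf_descent_dihedral (i j a : B) (n : ℕ)
    (hij : orderOf (cs.simple i * cs.simple j) = 0)
    (h : cs.IsRightDescent ((cs.simple i * cs.simple j) ^ n) a) :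
    orderOf (cs.simple a * cs.simple i) = 0 := by
  obtain ⟨k, hk⟩ := rightDescent_dihedral cs i j a n h
  have hji : orderOf (cs.simple j * cs.simple i) = 0 := by
    rw [← orderOf_inv]
    simpa using hij
  rw [hk, mul_assoc, ← pow_succ, orderOf_eq_zero_iff']
  intro m hm
  rw [← pow_mul]
  exact orderOf_eq_zero_iff'.1 hji _ (by positivity)

end Coxeter

/-! ### Comparison inequalities in CAT(0) spaces -/

section Geometry

variable {X : Type*} [MetricSpace X]

/-- Law of cosines form of the CAT(0) inequality at the vertex `p`. -/
lemma CAT0.cos_ineq (h : CAT0 X) {p q r : X} {γ γ' : ℝ → X}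
    (hγ : IsGeodesicFrom γ p q) (hγ' : IsGeodesicFrom γ' p r)
    (ha : 0 < dist p q) (hb : 0 < dist p r) {s t : ℝ}
    (hs : s ∈ Set.Icc (0 : ℝ) (dist p q)) (ht : t ∈ Set.Icc (0 : ℝ) (dist p r)) :
    dist (γ s) (γ' t) ^ 2 * (dist p q * dist p r) ≤
      (s ^ 2 + t ^ 2) * (dist p q * dist p r) -
        s * t * (dist p q ^ 2 + dist p r ^ 2 - dist q r ^ 2) := by
  have key := h.2 p q r γ γ' hγ hγ'
  have t1 : dist p q ≤ dist p r + dist q r := by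
    rw [dist_comm q r]; exact dist_triangle _ _ _
  have t2 : dist p r ≤ dist p q + dist q r := dist_triangle _ _ _
  have t3 : dist q r ≤ dist p q + dist p r := by
    rw [dist_comm p q]; exact dist_triangle _ _ _
  have hc : 0 ≤ dist q r := dist_nonneg
  set a := dist p q
  set b := dist p r
  set c := dist q r
  obtain ⟨x, hx⟩ : ∃ x : ℝ, 2 * a * x = a ^ 2 + b ^ 2 - c ^ 2 :=
    ⟨(a ^ 2 + b ^ 2 - c ^ 2) / (2 * a), by field_simp⟩
  have hxb : 0 ≤ b ^ 2 - x ^ 2 := by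
    have h1 : x ≤ b := by
      by_contra! hlt
      nlinarith
    have h2 : -b ≤ x := by
      by_contra! hlt
      nlinarith
    nlinarith
  obtain ⟨y, hy⟩ : ∃ y : ℝ, y ^ 2 = b ^ 2 - x ^ 2 := ⟨√(b ^ 2 - x ^ 2), Real.sq_sqrt hxb⟩
  have d1 : dist (!₂[0, 0] : EuclideanSpace ℝ (Fin 2)) !₂[a, 0] = a := by
    rw [EuclideanSpace.dist_eq]
    simp [Fin.sum_univ_two, Real.dist_eq, Real.sqrt_sq ha.le]
  have d2 : dist (!₂[0, 0] : EuclideanSpace ℝ (Fin 2)) !₂[x, y] = b := by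
    rw [EuclideanSpace.dist_eq]
    simp only [Fin.sum_univ_two, Real.dist_eq, sq_abs]
    simp only [Matrix.cons_val_zero, Matrix.cons_val_one]
    rw [show (0 - x) ^ 2 + (0 - y) ^ 2 = b ^ 2 by linarith [hy], Real.sqrt_sq hb.le]
  have d3 : dist (!₂[a, 0] : EuclideanSpace ℝ (Fin 2)) !₂[x, y] = c := by
    rw [EuclideanSpace.dist_eq]
    simp only [Fin.sum_univ_two, Real.dist_eq, sq_abs]
    simp only [Matrix.cons_val_zero, Matrix.cons_val_one]
    rw [show (a - x) ^ 2 + (0 - y) ^ 2 = c ^ 2 by linarith [hy], Real.sqrt_sq hc]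
  have k := key _ _ _ d1 d2 d3 s hs t ht
  have k2 := pow_le_pow_left₀ dist_nonneg k 2
  rw [EuclideanSpace.dist_eq, Real.sq_sqrt (by positivity)] at k2
  simp only [Fin.sum_univ_two, Real.dist_eq, sq_abs, cmpPt] at k2
  simp only [PiLp.add_apply, PiLp.sub_apply, PiLp.smul_apply,
    Matrix.cons_val_zero, Matrix.cons_val_one, smul_eq_mul] at k2
  have e : (0 + s / a * (a - 0) - (0 + t / b * (x - 0))) ^ 2 +
      (0 + s / a * (0 - 0) - (0 + t / b * (y - 0))) ^ 2 =
      s ^ 2 + t ^ 2 - 2 * s * t * x / b := by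
    have : (0 + s / a * (a - 0) - (0 + t / b * (x - 0))) ^ 2 +
      (0 + s / a * (0 - 0) - (0 + t / b * (y - 0))) ^ 2 =
      s ^ 2 - 2 * s * t * x / b + t ^ 2 / b ^ 2 * (x ^ 2 + y ^ 2) := by
      field_simp
      ring
    rw [this, hy]
    field_simp
    ring
  rw [e] at k2
  have k3 := mul_le_mul_of_nonneg_right k2 (mul_pos ha hb).le
  refine k3.trans (le_of_eq ?_)
  rw [← hx]
  field_simp

/-- Two geodesics issuing from the same point diverge at least linearly. -/
lemma CAT0.fellow (h : CAT0 X) {p q r : X} {γ γ' : ℝ → X}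
    (hγ : IsGeodesicFrom γ p q) (hγ' : IsGeodesicFrom γ' p r) {m s : ℝ} (hm : 0 < m)
    (hq : m ≤ dist p q) (hr : m ≤ dist p r) (hs0 : 0 ≤ s) (hs : s ≤ m) :
    dist (γ s) (γ' s) * m ≤ s * dist q r := by
  have k := h.cos_ineq hγ hγ' (hm.trans_le hq) (hm.trans_le hr)
    (s := s) (t := s) ⟨hs0, hs.trans hq⟩ ⟨hs0, hs.trans hr⟩
  have hab : m * m ≤ dist p q * dist p r := mul_le_mul hq hr hm.le dist_nonneg
  refine abs_le_of_sq_le_sq' ?_ (by positivity) |>.2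
  nlinarith [mul_le_mul_of_nonneg_left hab (sq_nonneg (dist (γ s) (γ' s))),
    mul_nonneg (sq_nonneg s) (sq_nonneg (dist p q - dist p r))]

/-- Thales-type comparison for proportional points on two sides of a triangle. -/
lemma CAT0.thales (h : CAT0 X) {p q r : X} {γ γ' : ℝ → X}
    (hγ : IsGeodesicFrom γ p q) (hγ' : IsGeodesicFrom γ' p r)
    (ha : 0 < dist p q) (hb : 0 < dist p r) {l : ℝ} (hl0 : 0 ≤ l) (hl1 : l ≤ 1) :
    dist (γ (l * dist p q)) (γ' (l * dist p r)) ≤ l * dist q r := by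
  have k := h.cos_ineq hγ hγ' ha hb (s := l * dist p q) (t := l * dist p r)
    ⟨by positivity, by nlinarith⟩ ⟨by positivity, by nlinarith⟩
  refine abs_le_of_sq_le_sq' ?_ (by positivity) |>.2
  refine le_of_mul_le_mul_right ?_ (mul_pos ha hb)
  refine k.trans (le_of_eq ?_)
  ring

/-- Convexity along a geodesic of the distance to a fixed point. -/
lemma CAT0.convex (h : CAT0 X) {p q : X} (r : X) {γ : ℝ → X}
    (hγ : IsGeodesicFrom γ p q) (ha : 0 < dist p q) (hb : 0 < dist p r) {s : ℝ}
    (hs : s ∈ Set.Icc (0 : ℝ) (dist p q)) :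
    dist (γ s) r * dist p q ≤ (dist p q - s) * dist p r + s * dist q r := by
  obtain ⟨γ', hγ'⟩ := h.1 p r
  have k := h.cos_ineq hγ hγ' ha hb hs (t := dist p r) ⟨hb.le, le_rfl⟩
  rw [hγ'.2.1] at k
  have t1 : dist p q ≤ dist p r + dist q r := by
    rw [dist_comm q r]; exact dist_triangle _ _ _
  have t2 : dist p r ≤ dist p q + dist q r := dist_triangle _ _ _
  have t3 : dist q r ≤ dist p q + dist p r := by
    rw [dist_comm p q]; exact dist_triangle _ _ _
  have hc : 0 ≤ dist q r := dist_nonneg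
  obtain ⟨hs0, hs1⟩ := hs
  generalize dist (γ s) r = D at *
  generalize dist p q = a at *
  generalize dist p r = b at *
  generalize dist q r = c at *
  have hbc : (b - c) ^ 2 ≤ a ^ 2 := by nlinarith
  have k1 : D ^ 2 * a ≤ (s ^ 2 + b ^ 2) * a - s * (a ^ 2 + b ^ 2 - c ^ 2) := by
    refine le_of_mul_le_mul_right ?_ hb
    linarith
  refine abs_le_of_sq_le_sq' ?_ ?_ |>.2
  · nlinarith [mul_nonneg (mul_nonneg hs0 (sub_nonneg.2 hs1)) (sub_nonneg.2 hbc)]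
  · have := mul_nonneg (sub_nonneg.2 hs1) hb.le
    positivity

lemma IsGeodesicRay.dist_eq {ξ : ℝ → X} (h : IsGeodesicRay ξ) {u v : ℝ} (hu : 0 ≤ u)
    (huv : u ≤ v) : dist (ξ u) (ξ v) = v - u := by
  rw [h u hu v (hu.trans huv), abs_sub_comm, abs_of_nonneg (sub_nonneg.2 huv)]

lemma IsGeodesicRay.isGeodesicFrom {ξ : ℝ → X} (h : IsGeodesicRay ξ) {v : ℝ} (hv : 0 ≤ v) :
    IsGeodesicFrom ξ (ξ 0) (ξ v) := by
  have e := h.dist_eq le_rfl hv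
  rw [sub_zero] at e
  refine ⟨rfl, by rw [e], fun s hs t ht => h s hs.1 t ht.1⟩

lemma IsGeodesicRay.shift {ξ : ℝ → X} (h : IsGeodesicRay ξ) {u : ℝ} (hu : 0 ≤ u) :
    IsGeodesicRay (fun t => ξ (u + t)) := by
  intro s hs t ht
  rw [h (u + s) (add_nonneg hu hs) (u + t) (add_nonneg hu ht)]
  congr 1
  ring

lemma IsGeodesicFrom.rev {γ : ℝ → X} {x y : X} (h : IsGeodesicFrom γ x y) :
    IsGeodesicFrom (fun t => γ (dist x y - t)) y x := by
  obtain ⟨h0, h1, h2⟩ := h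
  refine ⟨by simpa using h1, by simpa [dist_comm y x] using h0, ?_⟩
  rw [dist_comm y x]
  intro s hs t ht
  rw [h2 _ ⟨by linarith [hs.2], by linarith [hs.1]⟩ _ ⟨by linarith [ht.2], by linarith [ht.1]⟩,
    abs_sub_comm s t]
  congr 1
  ring

lemma Asymptotic.symm {ξ ζ : ℝ → X} (h : Asymptotic ξ ζ) : Asymptotic ζ ξ := by
  obtain ⟨C, hC⟩ := h
  exact ⟨C, fun t ht => by rw [dist_comm]; exact hC t ht⟩

lemma Asymptotic.trans {ξ ζ η : ℝ → X} (h : Asymptotic ξ ζ) (h' : Asymptotic ζ η) :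
    Asymptotic ξ η := by
  obtain ⟨C, hC⟩ := h
  obtain ⟨C', hC'⟩ := h'
  exact ⟨C + C', fun t ht => (dist_triangle _ _ _).trans (add_le_add (hC t ht) (hC' t ht))⟩

/-- The distance between asymptotic rays is greatest at the origin. -/
lemma CAT0.asymptotic_dist_le (h : CAT0 X) {ξ ζ : ℝ → X} (hξ : IsGeodesicRay ξ)
    (hζ : IsGeodesicRay ζ) (has : Asymptotic ξ ζ) {t : ℝ} (ht : 0 ≤ t) :
    dist (ξ t) (ζ t) ≤ dist (ξ 0) (ζ 0) := by
  obtain ⟨C, hC⟩ := has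
  have hC0 : 0 ≤ C := dist_nonneg.trans (hC 0 le_rfl)
  set d := dist (ξ 0) (ζ 0) with hd
  have hd0 : 0 ≤ d := dist_nonneg
  have main : ∀ s : ℝ, t + d < s → (dist (ξ t) (ζ t) - d) * (s - d) ≤ t * C := by
    intro s hs
    have hs0 : 0 < s := by linarith
    obtain ⟨σ, hσ⟩ := h.1 (ζ 0) (ξ s)
    have es : dist (ξ 0) (ξ s) = s := by rw [hξ.dist_eq le_rfl hs0.le, sub_zero]
    have ez : dist (ζ 0) (ζ s) = s := by rw [hζ.dist_eq le_rfl hs0.le, sub_zero]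
    have b1 : dist (ζ 0) (ξ s) ≤ s + d := by
      have := dist_triangle (ζ 0) (ξ 0) (ξ s)
      rw [es, dist_comm (ζ 0) (ξ 0)] at this
      linarith
    have b2 : s - d ≤ dist (ζ 0) (ξ s) := by
      have := dist_triangle (ξ 0) (ζ 0) (ξ s)
      rw [es] at this
      linarith
    have f1 := h.fellow hσ (hζ.isGeodesicFrom hs0.le) (m := s - d) (s := t) (by linarith) b2
      (by rw [ez]; linarith) ht (by linarith)
    have f2 := h.thales (hξ.isGeodesicFrom hs0.le).rev hσ.rev (by rw [dist_comm, es]; exact hs0)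
      (by rw [dist_comm]; linarith) (l := 1 - t / s)
      (by rw [sub_nonneg, div_le_one hs0]; linarith)
      (by linarith [div_nonneg ht hs0.le])
    rw [dist_comm (ξ s) (ξ 0), es, dist_comm (ξ s) (ζ 0)] at f2
    rw [show s - (1 - t / s) * s = t by field_simp; ring] at f2
    set b := dist (ζ 0) (ξ s) with hb
    rw [show b - (1 - t / s) * b = t * (b / s) by field_simp; ring, ← hd] at f2
    have f3 : dist (σ (t * (b / s))) (σ t) ≤ t / s * d := by
      have hbs : t * (b / s) ≤ b := by
        rw [mul_div_assoc', div_le_iff₀ hs0]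
        nlinarith
      rw [hσ.2.2 _ ⟨by positivity, hbs⟩ _ ⟨ht, by linarith⟩,
        show t * (b / s) - t = t / s * (b - s) by field_simp, abs_mul,
        abs_of_nonneg (div_nonneg ht hs0.le)]
      refine mul_le_mul_of_nonneg_left ?_ (div_nonneg ht hs0.le)
      rw [abs_le]
      constructor <;> linarith
    have f4 : dist (ξ t) (σ t) ≤ d := by
      have := dist_triangle (ξ t) (σ (t * (b / s))) (σ t)
      nlinarith
    have f5 := dist_triangle (ξ t) (σ t) (ζ t)
    have f6 : t * dist (ξ s) (ζ s) ≤ t * C := mul_le_mul_of_nonneg_left (hC s hs0.le) ht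
    have f7 : dist (ξ t) (ζ t) - d ≤ dist (σ t) (ζ t) := by linarith
    exact (mul_le_mul_of_nonneg_right f7 (by linarith)).trans (f1.trans f6)
  by_contra! hlt
  set e := dist (ξ t) (ζ t) - d with he
  have he0 : 0 < e := sub_pos.2 hlt
  have hdiv : 0 ≤ t * C / e := by positivity
  have := main (t + d + 1 + t * C / e) (by linarith)
  have e2 : e * (t + d + 1 + t * C / e - d) = e * t + e + t * C := by
    field_simp
    ring
  rw [e2] at this
  nlinarith

/-- If the ray `η` from `ξ t` asymptotic to `ζ` stays `C`-close to `ξ` up to time `R`, then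
`ξ` and `ζ` make a small angle: along `ξ` the distance to a far point of `η` decreases at rate at
least `1 - C / R` on `[t, t + R]`, hence on all of `[0, t]` by convexity. -/
lemma CAT0.small_angle (h : CAT0 X) {ξ ζ η : ℝ → X} (hξ : IsGeodesicRay ξ)
    (hζ : IsGeodesicRay ζ) (hη : IsGeodesicRay η) (h0 : ξ 0 = ζ 0) {t R C r : ℝ}
    (hr : 0 < r) (hrt : r ≤ t) (hC : 0 ≤ C) (hCR : C < R)
    (hηt : η 0 = ξ t) (has : Asymptotic η ζ) (hclose : dist (η R) (ξ (t + R)) ≤ C) :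
    dist (ξ r) (ζ r) ^ 2 ≤ 2 * r ^ 2 * (C / R) := by
  obtain ⟨K, hK⟩ := has
  have hK0 : 0 ≤ K := dist_nonneg.trans (hK 0 le_rfl)
  have ht : 0 < t := hr.trans_le hrt
  have hR : 0 < R := hC.trans_lt hCR
  set δ := C / R with hδ
  have hδ0 : 0 ≤ δ := by positivity
  have hδ1 : δ ≤ 1 := (div_le_one hR).2 hCR.le
  have hCδ : C = δ * R := by rw [hδ]; field_simp
  have main : ∀ s : ℝ, R + t + r < s →
      (dist (ξ r) (ζ r) - √(2 * r ^ 2 * δ)) * (s - t) ≤ r * K := by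
    intro s hs
    have hs0 : 0 < s := by linarith
    have e1 : dist (ξ 0) (ξ (t + R)) = t + R := by
      rw [hξ.dist_eq le_rfl (by linarith), sub_zero]
    have e2 : dist (ξ 0) (ξ t) = t := by rw [hξ.dist_eq le_rfl ht.le, sub_zero]
    have e3 : dist (ξ 0) (ξ r) = r := by rw [hξ.dist_eq le_rfl hr.le, sub_zero]
    have e4 : dist (ξ t) (η s) = s := by rw [← hηt, hη.dist_eq le_rfl hs0.le, sub_zero]
    have e5 : dist (η R) (η s) = s - R := hη.dist_eq hR.le (by linarith)
    have e6 : dist (ζ 0) (ζ s) = s := by rw [hζ.dist_eq le_rfl hs0.le, sub_zero]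
    have b1 : s - t ≤ dist (ξ 0) (η s) := by
      have := dist_triangle (ξ t) (ξ 0) (η s)
      rw [e4, dist_comm (ξ t), e2] at this
      linarith
    have b2 : dist (ξ (t + R)) (η s) ≤ C + (s - R) := by
      have := dist_triangle (ξ (t + R)) (η R) (η s)
      rw [e5, dist_comm (ξ (t + R)) (η R)] at this
      linarith
    have hf0 : 0 < dist (ξ 0) (η s) := by linarith
    have c1 := h.convex (η s) (hξ.isGeodesicFrom (v := t + R) (by linarith)) (by rw [e1]; linarith) hf0
      (s := t) ⟨ht.le, by rw [e1]; linarith⟩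
    rw [e1, e4] at c1
    have c2 := h.convex (η s) (hξ.isGeodesicFrom (v := t) ht.le) (by rw [e2]; exact ht) hf0
      (s := r) ⟨hr.le, by rw [e2]; exact hrt⟩
    rw [e2, e4] at c2
    obtain ⟨σ, hσ⟩ := h.1 (ξ 0) (η s)
    have c3 := h.cos_ineq (hξ.isGeodesicFrom hr.le) hσ (by rw [e3]; exact hr) hf0 (s := r) (t := r)
      ⟨hr.le, e3.ge⟩ ⟨hr.le, by linarith⟩
    rw [e3] at c3
    have c4 := h.fellow hσ (h0 ▸ hζ.isGeodesicFrom hs0.le) (m := s - t) (s := r) (by linarith) b1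
      (by rw [h0, e6]; linarith) hr.le (by linarith)
    have c5 : dist (ξ r) (σ r) ≤ √(2 * r ^ 2 * δ) := by
      refine Real.le_sqrt_of_sq_le ?_
      have hfr : 0 ≤ dist (ξ r) (η s) := dist_nonneg
      generalize dist (ξ r) (σ r) = D at *
      generalize dist (ξ 0) (η s) = f0 at *
      generalize dist (ξ r) (η s) = fr at *
      generalize dist (ξ (t + R)) (η s) = fR at *
      have g1 : t * (1 - δ) ≤ f0 - s := by
        refine le_of_mul_le_mul_right ?_ hR
        nlinarith [mul_le_mul_of_nonneg_left b2 ht.le]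
      have g2 : fr ≤ f0 - r * (1 - δ) := by
        refine le_of_mul_le_mul_right ?_ ht
        nlinarith [mul_le_mul_of_nonneg_left g1 hr.le]
      have g3 : fr ^ 2 ≤ (f0 - r * (1 - δ)) ^ 2 := pow_le_pow_left₀ hfr g2 2
      refine le_of_mul_le_mul_right ?_ (mul_pos hr hf0)
      have g4 := mul_le_mul_of_nonneg_left g3 (mul_nonneg hr.le hr.le)
      have g5 : 0 ≤ r * r * (r ^ 2 * (δ * (2 - δ))) :=
        mul_nonneg (by positivity) (mul_nonneg (by positivity) (mul_nonneg hδ0 (by linarith)))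
      nlinarith
    have c6 := dist_triangle (ξ r) (σ r) (ζ r)
    have c7 : r * dist (η s) (ζ s) ≤ r * K := mul_le_mul_of_nonneg_left (hK s hs0.le) hr.le
    have c8 : dist (ξ r) (ζ r) - √(2 * r ^ 2 * δ) ≤ dist (σ r) (ζ r) := by linarith
    exact (mul_le_mul_of_nonneg_right c8 (by linarith)).trans (c4.trans c7)
  have fin : dist (ξ r) (ζ r) ≤ √(2 * r ^ 2 * δ) := by
    by_contra! hlt
    set e := dist (ξ r) (ζ r) - √(2 * r ^ 2 * δ) with he
    have he0 : 0 < e := sub_pos.2 hlt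
    have hdiv : 0 ≤ r * K / e := by positivity
    have := main (R + t + r + 1 + r * K / e) (by linarith)
    have e2 : e * (R + t + r + 1 + r * K / e - t) = e * (R + r + 1) + r * K := by
      field_simp
      ring
    rw [e2] at this
    nlinarith [mul_pos he0 (show 0 < R + r + 1 by linarith)]
  calc dist (ξ r) (ζ r) ^ 2 ≤ √(2 * r ^ 2 * δ) ^ 2 := pow_le_pow_left₀ dist_nonneg fin 2
    _ = 2 * r ^ 2 * δ := Real.sq_sqrt (by positivity)

/-- If points converging to the endpoint of the ray `ρ` are joined to `ρ 0` by geodesics passing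
near `p`, then `ρ` itself passes near `p`. -/
lemma CAT0.ray_near (h : CAT0 X) {ρ : ℝ → X} (hρ : IsGeodesicRay ρ) (p : X) (z : ℕ → X)
    {C N : ℝ}
    (hz : ∃ᶠ i : ℕ in Filter.atTop, dist (z i) (ρ i) ≤ C ∧
      ∀ γ : ℝ → X, IsGeodesicFrom γ (ρ 0) (z i) →
        Metric.infDist p (γ '' Set.Icc (0 : ℝ) (dist (ρ 0) (z i))) ≤ N) :
    dist (ρ (dist (ρ 0) p)) p ≤ 2 * N + 3 := by
  set D := dist (ρ 0) p with hD
  have hD0 : 0 ≤ D := dist_nonneg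
  obtain ⟨k, hk⟩ := exists_nat_ge (C + D + D * C + 1)
  obtain ⟨i, hi, hzi, hγ⟩ := (Filter.frequently_atTop.1 hz) k
  have hC0 : 0 ≤ C := dist_nonneg.trans hzi
  have hDC : 0 ≤ D * C := mul_nonneg hD0 hC0
  have hi' : C + D + D * C + 1 ≤ (i : ℝ) := hk.trans (by exact_mod_cast hi)
  obtain ⟨γ, g⟩ := h.1 (ρ 0) (z i)
  have ei : dist (ρ 0) (ρ i) = i := by rw [hρ.dist_eq le_rfl (by linarith), sub_zero]
  have b1 : (i : ℝ) - C ≤ dist (ρ 0) (z i) := by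
    have := dist_triangle (ρ 0) (z i) (ρ i)
    linarith
  have f := h.fellow g (hρ.isGeodesicFrom (v := i) (by linarith)) (m := i - C) (s := D) (by linarith) b1
    (by rw [ei]; linarith) hD0 (by linarith)
  have f1 : dist (γ D) (ρ D) ≤ 1 := by
    refine le_of_mul_le_mul_right ?_ (show 0 < (i : ℝ) - C by linarith)
    have := mul_le_mul_of_nonneg_left hzi hD0
    linarith
  have hne : (γ '' Set.Icc (0 : ℝ) (dist (ρ 0) (z i))).Nonempty :=
    ⟨γ 0, 0, ⟨le_rfl, dist_nonneg⟩, rfl⟩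
  obtain ⟨_, ⟨τ, hτ, rfl⟩, hp⟩ := (Metric.infDist_lt_iff hne).1
    ((hγ γ g).trans_lt (lt_add_one N))
  have e0 : dist (ρ 0) (γ τ) = τ := by
    conv_lhs => rw [← g.1]
    rw [g.2.2 0 ⟨le_rfl, dist_nonneg⟩ τ hτ, zero_sub, abs_neg, abs_of_nonneg hτ.1]
  have e1 : dist (γ D) (γ τ) ≤ N + 1 := by
    rw [g.2.2 D ⟨hD0, by linarith⟩ τ hτ, abs_le]
    have t1 := dist_triangle (ρ 0) (γ τ) p
    have t2 := dist_triangle (ρ 0) p (γ τ)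
    rw [dist_comm (γ τ) p] at t1
    constructor <;> linarith
  have t1 := dist_triangle (ρ D) (γ D) p
  have t2 := dist_triangle (γ D) (γ τ) p
  rw [dist_comm (ρ D) (γ D)] at t1
  rw [dist_comm (γ τ) p] at t2
  linarith

end Geometry

/-! ### The metric on the boundary -/

section Boundary

variable {G X Bd : Type*} [Group G] [MetricSpace X] [MulAction G X] [MulAction G Bd]

lemma bdist_summand_summable (Bo : BoundaryStruct G X Bd) (x₀ : X) (α β : Bd) :
    Summable fun i : ℕ => min (dist (Bo.ray x₀ α (i + 1)) (Bo.ray x₀ β (i + 1)))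
      ((1 : ℝ) / 2 ^ (i + 1)) :=
  Summable.of_nonneg_of_le (fun i => le_min dist_nonneg (by positivity))
    (fun i => min_le_right _ _)
    (by simpa using (summable_nat_add_iff 1).2 summable_geometric_two)

lemma bdist_nonneg (Bo : BoundaryStruct G X Bd) (x₀ : X) (α β : Bd) :
    0 ≤ bdist Bo x₀ α β :=
  tsum_nonneg fun _ => le_min dist_nonneg (by positivity)

lemma bdist_le (Bo : BoundaryStruct G X Bd) (x₀ : X) (α β : Bd) :
    bdist Bo x₀ α β ≤ ∑' i : ℕ, (1 : ℝ) / 2 ^ (i + 1) :=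
  (bdist_summand_summable Bo x₀ α β).tsum_le_tsum (fun i => min_le_right _ _)
    (by simpa using (summable_nat_add_iff 1).2 summable_geometric_two)

lemma tendsto_cofinite_of_dist (x₀ : X) (g : ℕ → G)
    (h : Filter.Tendsto (fun n => dist x₀ (g n • x₀)) Filter.atTop Filter.atTop) :
    Filter.Tendsto g Filter.atTop Filter.cofinite := by
  intro s hs
  rw [Filter.mem_cofinite] at hs
  obtain ⟨R, hR⟩ := (hs.image fun a => dist x₀ (a • x₀)).bddAbove
  rw [Filter.mem_map]
  filter_upwards [h.eventually_gt_atTop R] with n hn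
  by_contra hmem
  exact absurd (hR ⟨g n, hmem, rfl⟩) (not_le.2 hn)

lemma BoundaryStruct.dist_ray_le (Bo : BoundaryStruct G X Bd) (hCAT : CAT0 X) (x y : X) (α : Bd)
    {t : ℝ} (ht : 0 ≤ t) : dist (Bo.ray x α t) (Bo.ray y α t) ≤ dist x y := by
  have := hCAT.asymptotic_dist_le (Bo.isRay x α) (Bo.isRay y α) (Bo.ray_asymp x y α) ht
  rwa [Bo.ray_start, Bo.ray_start] at this

/-- Translates by elements carrying points far along the ray to `α` back near `x₀` keep `α` and
`β` uniformly apart. -/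
lemma limsup_bdist_pos (hCAT : CAT0 X) (hgeo : GeometricAction G X)
    (Bo : BoundaryStruct G X Bd) (x₀ : X) {α β : Bd} (hαβ : α ≠ β) :
    0 < Filter.limsup (fun g : G => bdist Bo x₀ (g • α) (g • β)) Filter.cofinite := by
  obtain ⟨hiso, -, hco⟩ := hgeo
  obtain ⟨R₀, hR₀, hcov⟩ := hco x₀
  set ξ := Bo.ray x₀ α with hξ
  set ζ := Bo.ray x₀ β with hζ
  have h0 : ξ 0 = ζ 0 := by rw [hξ, hζ, Bo.ray_start, Bo.ray_start]
  obtain ⟨r, hr0, hr⟩ : ∃ r : ℝ, 0 ≤ r ∧ ξ r ≠ ζ r := by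
    by_contra! hall
    exact hαβ (Bo.ray_inj x₀ α β ⟨0, fun t ht => by rw [← hξ, ← hζ, hall t ht, dist_self]⟩)
  have hr' : 0 < r := lt_of_le_of_ne hr0 (by rintro rfl; exact hr h0)
  have hρ : 0 < dist (ξ r) (ζ r) ^ 2 := pow_pos (dist_pos.2 hr) 2
  set C := 2 * R₀ + 1 with hC
  obtain ⟨m, hm⟩ := exists_nat_gt (max C (2 * r ^ 2 * C / dist (ξ r) (ζ r) ^ 2))
  rw [max_lt_iff] at hm
  obtain ⟨k, rfl⟩ : ∃ k, m = k + 1 := by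
    refine Nat.exists_eq_succ_of_ne_zero ?_
    rintro rfl
    have := hm.1
    simp only [Nat.cast_zero] at this
    linarith
  push_cast at hm
  have hkR : 2 * r ^ 2 * (C / (k + 1 : ℝ)) < dist (ξ r) (ζ r) ^ 2 := by
    have := hm.2
    rw [div_lt_iff₀ hρ] at this
    rw [mul_div_assoc', div_lt_iff₀ (by positivity)]
    linarith
  choose g hg using fun n : ℕ => hcov (ξ (r + n))
  have hfar : ∀ n, dist x₀ ((g n)⁻¹ • x₀) = dist x₀ (g n • x₀) := by
    intro n
    rw [← hiso (g n), smul_inv_smul, dist_comm]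
  have hT : Filter.Tendsto (fun n => (g n)⁻¹) Filter.atTop Filter.cofinite := by
    refine tendsto_cofinite_of_dist x₀ _ ?_
    refine Filter.tendsto_atTop_mono (f := fun n : ℕ => (n : ℝ) + (- R₀)) ?_
      (Filter.tendsto_atTop_add_const_right _ _ tendsto_natCast_atTop_atTop)
    intro n
    rw [hfar]
    have e : dist (ξ 0) (ξ (r + n)) = r + n := by
      rw [(Bo.isRay x₀ α).dist_eq le_rfl (by positivity), sub_zero]
    rw [hξ, Bo.ray_start, ← hξ] at e
    have := dist_triangle x₀ (g n • x₀) (ξ (r + n))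
    rw [dist_comm (g n • x₀)] at this
    linarith [hg n]
  have hbig : ∀ n, (1 : ℝ) / 2 ^ (k + 1) ≤ bdist Bo x₀ ((g n)⁻¹ • α) ((g n)⁻¹ • β) := by
    intro n
    have htr : ∀ a : Bd, Bo.ray x₀ ((g n)⁻¹ • a) (k + 1) =
        (g n)⁻¹ • Bo.ray (g n • x₀) a (k + 1) := by
      intro a
      rw [Bo.equivariant, inv_smul_smul]
    have hk0 : (0 : ℝ) ≤ k + 1 := by positivity
    have h1 : 1 ≤ dist (Bo.ray x₀ ((g n)⁻¹ • α) (k + 1)) (Bo.ray x₀ ((g n)⁻¹ • β) (k + 1)) := by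
      rw [htr, htr, hiso]
      by_contra! hlt
      have hrn : (0 : ℝ) ≤ r + n := by positivity
      set p := ξ (r + n) with hp
      have s1 : dist (Bo.ray (g n • x₀) α (k + 1)) (ξ (r + n + (k + 1))) ≤ R₀ := by
        have hsh := (Bo.isRay x₀ α).shift hrn
        have has : Asymptotic (Bo.ray (g n • x₀) α) (fun t => ξ (r + n + t)) := by
          obtain ⟨K, hK⟩ := Bo.ray_asymp (g n • x₀) x₀ α
          refine ⟨K + (r + n), fun t ht => ?_⟩
          have a1 := dist_triangle (Bo.ray (g n • x₀) α t) (ξ t) (ξ (r + n + t))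
          have a2 := (Bo.isRay x₀ α).dist_eq ht (show t ≤ r + n + t by linarith)
          have a3 := hK t ht
          linarith
        have := hCAT.asymptotic_dist_le (Bo.isRay _ α) hsh has hk0
        rw [Bo.ray_start, add_zero] at this
        refine this.trans ?_
        rw [dist_comm]
        exact hg n
      have s2 : dist (Bo.ray p β (k + 1)) (Bo.ray (g n • x₀) β (k + 1)) ≤ R₀ :=
        (Bo.dist_ray_le hCAT _ _ β hk0).trans (hg n)
      have s3 : dist (Bo.ray p β (k + 1)) (ξ (r + n + (k + 1))) ≤ C := by
        have a1 := dist_triangle4 (Bo.ray p β (k + 1)) (Bo.ray (g n • x₀) β (k + 1))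
          (Bo.ray (g n • x₀) α (k + 1)) (ξ (r + n + (k + 1)))
        rw [dist_comm (Bo.ray (g n • x₀) β (k + 1))] at a1
        linarith
      have := hCAT.small_angle (Bo.isRay x₀ α) (Bo.isRay x₀ β) (Bo.isRay p β) h0 hr'
        (le_add_of_nonneg_right (Nat.cast_nonneg n)) (by linarith) hm.1 (Bo.ray_start p β)
        (Bo.ray_asymp p x₀ β) s3
      exact absurd this (not_le.2 hkR)
    refine le_trans ?_ ((bdist_summand_summable Bo x₀ _ _).le_tsum k
      (fun i _ => le_min dist_nonneg (by positivity)))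
    refine le_min (le_trans ?_ h1) le_rfl
    rw [div_le_one (by positivity)]
    exact one_le_pow₀ one_le_two
  have hfreq : ∃ᶠ a in Filter.cofinite, (1 : ℝ) / 2 ^ (k + 1) ≤ bdist Bo x₀ (a • α) (a • β) :=
    hT.frequently (Filter.Frequently.of_forall hbig)
  refine lt_of_lt_of_le (by positivity) (Filter.le_limsup_of_frequently_le hfreq ?_)
  exact Filter.isBoundedUnder_of ⟨_, fun a => bdist_le Bo x₀ _ _⟩

end Boundary

/-! ### Common descents and translates bringing two boundary points together -/

section Main

variable {B W X Bd : Type*} [Group W] [MetricSpace X] [MulAction W X] [MulAction W Bd]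
  {M : CoxeterMatrix B}

/-- Only finitely many `x` have length at most `K`, so one of them serves infinitely many pairs
`(w n, v n)` at once: `x⁻¹ * w n` and `x⁻¹ * v n` have left descent set `{s₀}`. -/
lemma exists_common_descent [Finite B] (cs : CoxeterSystem M W) (s₀ : B) (K : ℝ)
    (hK : ∀ w v : W, ∃ x : W, (cs.length x : ℝ) ≤ K ∧
      descentSet cs (w * x) = {s₀} ∧ descentSet cs (v * x) = {s₀}) (w v : ℕ → W) :
    ∃ x : W, ∃ᶠ n in Filter.atTop,
      descentSet cs ((w n)⁻¹ * x) = {s₀} ∧ descentSet cs ((v n)⁻¹ * x) = {s₀} := by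
  have hfin : {x : W | (cs.length x : ℝ) ≤ K}.Finite := by
    obtain ⟨k, hk⟩ := exists_nat_ge K
    refine ((List.finite_length_le B k).image cs.wordProd).subset ?_
    intro x hx
    obtain ⟨ω, hω, rfl⟩ := cs.exists_isReduced x
    refine ⟨ω, ?_, rfl⟩
    have h1 : (cs.length (cs.wordProd ω) : ℝ) ≤ K := hx
    rw [hω.eq] at h1
    exact_mod_cast h1.trans hk
  by_contra hno
  rw [not_exists] at hno
  have hno' : ∀ x ∈ {x : W | (cs.length x : ℝ) ≤ K}, ∀ᶠ n in Filter.atTop,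
      ¬ (descentSet cs ((w n)⁻¹ * x) = {s₀} ∧ descentSet cs ((v n)⁻¹ * x) = {s₀}) :=
    fun x _ => Filter.not_frequently.1 (hno x)
  obtain ⟨n, hn⟩ := ((Filter.eventually_all_finite hfin).2 hno').exists
  obtain ⟨x, hx, h⟩ := hK (w n)⁻¹ (v n)⁻¹
  exact hn x hx h

/-- The translates are `g n = (s₀ t₀)^n x⁻¹`, with `x` from `exists_common_descent` for group
elements following the rays to `α` and `β`. Since the right descents of `(s₀ t₀)^n` have
infinite-order product with `s₀`, the rays from `x₀` to `g n • α` and `g n • β` both pass near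
`(s₀ t₀)^n • x₀`, which tends to infinity. -/
lemma liminf_bdist_eq_zero [Finite B] (cs : CoxeterSystem M W)
    (hCAT : CAT0 X) (hgeo : GeometricAction W X)
    (Bo : BoundaryStruct W X Bd) (x₀ : X) (N : ℝ)
    (hii : ∀ x y : W,
      (∀ a b : B, cs.IsRightDescent x a → cs.IsRightDescent y⁻¹ b →
        orderOf (cs.simple a * cs.simple b) = 0) →
      ∀ γ : ℝ → X, IsGeodesicFrom γ x₀ ((x * y) • x₀) →
        Metric.infDist (x • x₀) (γ '' Set.Icc (0 : ℝ) (dist x₀ ((x * y) • x₀))) ≤ N)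
    (s₀ t₀ : B) (hst : orderOf (cs.simple s₀ * cs.simple t₀) = 0) (K : ℝ)
    (hK : ∀ w v : W, ∃ x : W, (cs.length x : ℝ) ≤ K ∧
      descentSet cs (w * x) = {s₀} ∧ descentSet cs (v * x) = {s₀}) (α β : Bd) :
    Filter.liminf (fun g : W => bdist Bo x₀ (g • α) (g • β)) Filter.cofinite = 0 := by
  obtain ⟨hiso, hprop, hco⟩ := hgeo
  obtain ⟨R₀, hR₀, hcov⟩ := hco x₀
  choose w hw using fun n : ℕ => hcov (Bo.ray x₀ α n)
  choose v hv using fun n : ℕ => hcov (Bo.ray x₀ β n)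
  obtain ⟨x, hx⟩ := exists_common_descent cs s₀ K hK w v
  set h : ℕ → W := fun n => (cs.simple s₀ * cs.simple t₀) ^ n with hh
  have hinj : Function.Injective h :=
    injective_pow_iff_not_isOfFinOrder.2 (orderOf_eq_zero_iff.1 hst)
  set D : ℕ → ℝ := fun n => dist x₀ (h n • x₀) with hD
  have hDtop : Filter.Tendsto D Filter.atTop Filter.atTop := by
    refine Filter.tendsto_atTop.2 fun R => ?_
    have h1 : ∀ᶠ g : W in Filter.cofinite, ¬ dist x₀ (g • x₀) ≤ R := by
      rw [Filter.eventually_cofinite]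
      simpa using hprop x₀ R
    have h2 : Filter.Tendsto h Filter.atTop Filter.cofinite := by
      rw [← Nat.cofinite_eq_atTop]
      exact hinj.tendsto_cofinite
    filter_upwards [h2.eventually h1] with n hn using (not_le.1 hn).le
  set g : ℕ → W := fun n => h n * x⁻¹ with hg
  have hT : Filter.Tendsto g Filter.atTop Filter.cofinite := by
    rw [← Nat.cofinite_eq_atTop]
    exact ((mul_left_injective x⁻¹).comp hinj).tendsto_cofinite
  -- Both translated rays pass within `2 N + 3` of `h n • x₀`.
  have hnear : ∀ (a : Bd) (u : ℕ → W), (∀ n : ℕ, dist (Bo.ray x₀ a n) (u n • x₀) ≤ R₀) →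
      (∃ᶠ n in Filter.atTop, descentSet cs ((u n)⁻¹ * x) = {s₀}) →
      ∀ n, dist (Bo.ray x₀ (g n • a) (D n)) (h n • x₀) ≤ 2 * N + 3 := by
    intro a u hu hfr n
    have key := hCAT.ray_near (Bo.isRay x₀ (g n • a)) (h n • x₀)
      (fun i => (g n * u i) • x₀) (C := R₀ + dist (g n • x₀) x₀) (N := N) ?_
    · rwa [Bo.ray_start] at key
    refine hfr.mono fun i hi => ⟨?_, ?_⟩
    · have d1 : dist ((g n * u i) • x₀) (Bo.ray (g n • x₀) (g n • a) i) ≤ R₀ := by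
        rw [← Bo.equivariant, mul_smul, hiso, dist_comm]
        exact hu i
      have d2 := Bo.dist_ray_le hCAT (g n • x₀) x₀ (g n • a) (Nat.cast_nonneg i)
      exact (dist_triangle _ _ _).trans (add_le_add d1 d2)
    · rw [Bo.ray_start]
      have e : g n * u i = h n * (x⁻¹ * u i) := by simp only [hg, mul_assoc]
      rw [e]
      refine hii (h n) (x⁻¹ * u i) ?_
      intro b c hb hc
      have hc' : c ∈ descentSet cs ((u i)⁻¹ * x) := by
        simpa [descentSet, mul_inv_rev] using hc
      rw [hi, Set.mem_singleton_iff] at hc'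
      rw [hc']
      exact orderOf_descent_dihedral cs s₀ t₀ b n hst hb
  have hclose : ∀ n, dist (Bo.ray x₀ (g n • α) (D n)) (Bo.ray x₀ (g n • β) (D n)) ≤
      4 * N + 6 := by
    intro n
    have h1 := hnear α w hw (hx.mono fun _ h => h.1) n
    have h2 := hnear β v hv (hx.mono fun _ h => h.2) n
    have h3 := dist_triangle_right (Bo.ray x₀ (g n • α) (D n)) (Bo.ray x₀ (g n • β) (D n))
      (h n • x₀)
    linarith
  have hfel : ∀ (s : ℝ), 0 ≤ s → ∀ n, 0 < D n → s ≤ D n →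
      dist (Bo.ray x₀ (g n • α) s) (Bo.ray x₀ (g n • β) s) ≤ s * (4 * N + 6) / D n := by
    intro s hs n hDn hsD
    have eα := (Bo.isRay x₀ (g n • α)).dist_eq le_rfl hDn.le
    have eβ := (Bo.isRay x₀ (g n • β)).dist_eq le_rfl hDn.le
    have gα := (Bo.isRay x₀ (g n • α)).isGeodesicFrom hDn.le
    have gβ := (Bo.isRay x₀ (g n • β)).isGeodesicFrom hDn.le
    rw [Bo.ray_start, sub_zero] at eα eβ
    rw [Bo.ray_start] at gα gβ
    have := hCAT.fellow gα gβ hDn eα.ge eβ.ge hs hsD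
    rw [le_div_iff₀ hDn]
    exact this.trans (mul_le_mul_of_nonneg_left (hclose n) hs)
  have hlim : Filter.Tendsto (fun n => bdist Bo x₀ (g n • α) (g n • β)) Filter.atTop (nhds 0) := by
    have := tendsto_tsum_of_dominated_convergence (𝓕 := Filter.atTop)
      (f := fun (n : ℕ) (i : ℕ) => min (dist (Bo.ray x₀ (g n • α) (i + 1))
        (Bo.ray x₀ (g n • β) (i + 1))) ((1 : ℝ) / 2 ^ (i + 1)))
      (g := fun _ => (0 : ℝ)) (bound := fun i : ℕ => (1 : ℝ) / 2 ^ (i + 1))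
      (by simpa using (summable_nat_add_iff 1).2 summable_geometric_two) ?_ ?_
    · simpa [bdist] using this
    · intro i
      have hup : Filter.Tendsto (fun n => ((i : ℝ) + 1) * (4 * N + 6) / D n) Filter.atTop (nhds 0) :=
        hDtop.const_div_atTop _
      refine squeeze_zero' (Filter.Eventually.of_forall fun n =>
        le_min dist_nonneg (by positivity)) ?_ hup
      filter_upwards [hDtop.eventually_ge_atTop ((i : ℝ) + 1)] with n hn
      have hi : (0 : ℝ) < (i : ℝ) + 1 := by positivity
      exact (min_le_left _ _).trans (hfel _ hi.le n (hi.trans_le hn) hn)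
    · refine Filter.Eventually.of_forall fun n i => ?_
      rw [Real.norm_of_nonneg (le_min dist_nonneg (by positivity))]
      exact min_le_right _ _
  have : Infinite W := Infinite.of_injective h hinj
  apply le_antisymm
  · refine le_of_forall_pos_le_add fun ε hε => ?_
    rw [zero_add]
    refine Filter.liminf_le_of_frequently_le ?_ ?_
    · exact hT.frequently ((hlim.eventually (ge_mem_nhds hε)).frequently)
    · exact Filter.isBoundedUnder_of ⟨0, fun a => bdist_nonneg Bo x₀ _ _⟩
  · refine Filter.le_liminf_of_le ?_ (Filter.Eventually.of_forall fun a => bdist_nonneg Bo x₀ _ _)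
    exact Filter.IsBoundedUnder.isCoboundedUnder_ge
      (Filter.isBoundedUnder_of ⟨_, fun a => bdist_le Bo x₀ _ _⟩)

end Main

/-- Theorem 7.1. Let `(W,S)` be a Coxeter system acting geometrically
on a CAT(0) space `X` with basepoint `x₀`, `|∂X| > 2`, and suppose there is `N > 0`
such that: (i) for every `α ∈ ∂X` there is a sequence `(sᵢ) ⊆ S` with every word
`s₁⋯sᵢ` reduced and `d(s₁⋯sᵢ·x₀, Im ξ_{x₀,α}) ≤ N` for all `i`; and (ii) for all
`x, y ∈ W`, if `o(st) = ∞` for every `s ∈ S(x)` and `t ∈ S(y⁻¹)`, then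
`d(x·x₀, [x₀,(xy)·x₀]) ≤ N`.  If moreover there are `s₀, t₀ ∈ S` and `K > 0` with
`o(s₀t₀) = ∞` and such that for all `w, v ∈ W` there is `x ∈ W` with `ℓ(x) ≤ K` and
`wx, vx ∈ W^{{s₀}}`, then `∂X` is a scrambled set. -/
theorem coxeter_scrambled_of_common_descent {B W X Bd : Type*} [Finite B] [Group W]
    [MetricSpace X] [MulAction W X] [MulAction W Bd]
    {M : CoxeterMatrix B} (cs : CoxeterSystem M W)
    (hCAT : CAT0 X) (hgeo : GeometricAction W X)
    (Bo : BoundaryStruct W X Bd) (x₀ : X) (hcard : MoreThanTwo Bd)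
    (N : ℝ) (hN : 0 < N)
    (hi : ∀ α : Bd, ∃ s : ℕ → B, ∀ i : ℕ, 1 ≤ i →
      cs.IsReduced ((List.range i).map (fun k => s (k + 1))) ∧
      Metric.infDist ((cs.wordProd ((List.range i).map (fun k => s (k + 1)))) • x₀)
        (Bo.ray x₀ α '' Set.Ici (0 : ℝ)) ≤ N)
    (hii : ∀ x y : W,
      (∀ a b : B, cs.IsRightDescent x a → cs.IsRightDescent y⁻¹ b →
        orderOf (cs.simple a * cs.simple b) = 0) →
      ∀ γ : ℝ → X, IsGeodesicFrom γ x₀ ((x * y) • x₀) →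
        Metric.infDist (x • x₀) (γ '' Set.Icc (0 : ℝ) (dist x₀ ((x * y) • x₀))) ≤ N)
    (hmain : ∃ s₀ t₀ : B,
      orderOf (cs.simple s₀ * cs.simple t₀) = 0 ∧
      ∃ K : ℝ, 0 < K ∧ ∀ w v : W, ∃ x : W, (cs.length x : ℝ) ≤ K ∧
        descentSet cs (w * x) = {s₀} ∧ descentSet cs (v * x) = {s₀}) :
    IsScrambled Bo x₀ := by
  obtain ⟨s₀, t₀, hst, K, -, hK⟩ := hmain
  exact fun α β hαβ => ⟨limsup_bdist_pos hCAT hgeo Bo x₀ hαβ,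
    liminf_bdist_eq_zero cs hCAT hgeo Bo x₀ N hii s₀ t₀ hst K hK α β⟩
end

section
/- Let (W,S) be an irreducible right-angled Coxeter system and let w ∈ W. Suppose t₁, t₂, …, t_n ∈ S are such that (1) t₁ ∉ S(w), (2) o(t_i t_{i+1}) = ∞ for every i ∈ {1, …, n−1}, and (3) {t₁, t₂, …, t_n} = S. Then w·(t₁t₂⋯t_n) ∈ W^{{t_n}}, i.e. S(w·t₁t₂⋯t_n) = {t_n}. -/
namespace RightAngledDescent

open CoxeterSystem

/-! ### The parity cocycle -/

variable {B W : Type*} [Group W] {M : CoxeterMatrix B} (cs : CoxeterSystem M W)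

open Classical in
/-- The indicator function of `{a}`, with values in `ℤ/2`. -/
noncomputable def ind (a x : W) : ZMod 2 := if x = a then 1 else 0

omit [Group W] in
lemma ind_congr {a x y : W} (h : x = a ↔ y = a) : ind a x = ind a y := by
  unfold ind
  by_cases hy : y = a
  · rw [if_pos hy, if_pos (h.2 hy)]
  · rw [if_neg hy, if_neg (fun hx => hy (h.1 hx))]

/-- The action of the generator `i` on `W × ℤ/2`: conjugate the first coordinate by `s i`, and flip
the second one when the first is `s i`. -/
noncomputable def step (i : B) : Function.End (W × ZMod 2) := fun p =>
  (cs.simple i * p.1 * cs.simple i, p.2 + ind (cs.simple i) p.1)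

lemma step_liftable (hra : M.RightAngled) : M.IsLiftable (step cs) := by
  intro i j
  by_cases hij : i = j
  · subst hij
    rw [M.diagonal, pow_one]
    funext p
    obtain ⟨x, e⟩ := p
    have hx : cs.simple i * x * cs.simple i = cs.simple i ↔ x = cs.simple i := by
      constructor
      · intro h
        have := congrArg (fun y => cs.simple i * y * cs.simple i) h
        simpa [mul_assoc] using this
      · rintro rfl; simp
    have hx' : ind (cs.simple i) (cs.simple i * x * cs.simple i) = ind (cs.simple i) x :=
      ind_congr hx
    change step cs i (step cs i (x, e)) = (x, e)
    simp only [step, hx']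
    ext
    · simp [mul_assoc]
    · change e + _ + _ = e
      generalize ind (cs.simple i) x = p
      revert e p
      decide
  · rcases hra i j hij with h | h
    · rw [h]
      have hsq := cs.simple_mul_simple_pow i j
      rw [h, pow_two] at hsq
      have hc : cs.simple i * cs.simple j = cs.simple j * cs.simple i := by
        have := eq_inv_of_mul_eq_one_left hsq
        simpa using this
      -- conjugation by `s b` does not change whether an element equals a generator commuting
      -- with `s b`
      have key : ∀ (a b : B), cs.simple a * cs.simple b = cs.simple b * cs.simple a → ∀ x : W,
          ind (cs.simple a) (cs.simple b * x * cs.simple b) = ind (cs.simple a) x := by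
        intro a b hab x
        apply ind_congr
        constructor
        · intro h
          have := congrArg (fun y => cs.simple b * y * cs.simple b) h
          simpa [mul_assoc, hab] using this
        · rintro rfl; simp [mul_assoc, hab]
      have k1 := key i j hc
      have k2 := key j i hc.symm
      have k3 := key i i rfl
      have k4 := key j j rfl
      rw [pow_two]
      funext p
      obtain ⟨x, e⟩ := p
      change step cs i (step cs j (step cs i (step cs j (x, e)))) = (x, e)
      simp only [step, k1, k2, k3, k4]
      ext
      · have h2 : cs.simple i * (cs.simple j * (cs.simple i * cs.simple j)) = 1 := by
          rw [← hsq]; group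
        have h3 : cs.simple j * (cs.simple i * (cs.simple j * cs.simple i)) = 1 := by
          rw [← hc, ← mul_assoc, ← hc]; exact hsq
        calc _ = (cs.simple i * (cs.simple j * (cs.simple i * cs.simple j))) * x *
            (cs.simple j * (cs.simple i * (cs.simple j * cs.simple i))) := by group
          _ = x := by rw [h2, h3]; group
      · change e + _ + _ + _ + _ = e
        generalize ind (cs.simple i) x = p
        generalize ind (cs.simple j) x = q
        revert e p q
        decide
    · rw [h, pow_zero]

/-- The action of `W` on `W × ℤ/2` extending `step`. -/
noncomputable def act (hra : M.RightAngled) : W →* Function.End (W × ZMod 2) :=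
  cs.lift ⟨step cs, step_liftable cs hra⟩

/-- The parity cocycle `η(w, x)`: how the action of `w` shifts the second coordinate over `x`. -/
noncomputable def eta (hra : M.RightAngled) (w x : W) : ZMod 2 := (act cs hra w (x, 0)).2

variable (hra : M.RightAngled)

lemma act_simple (i : B) : act cs hra (cs.simple i) = step cs i :=
  cs.lift_apply_simple (step_liftable cs hra) i

lemma act_apply (w x : W) (e : ZMod 2) :
    act cs hra w (x, e) = (w * x * w⁻¹, e + eta cs hra w x) := by
  induction w using cs.simple_induction_left generalizing x e with
  | one => simp [eta, Function.End.one_def]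
  | mul_simple_left w i ih =>
    have h : ∀ e, act cs hra (cs.simple i * w) (x, e) =
        step cs i (w * x * w⁻¹, e + eta cs hra w x) := by
      intro e
      rw [map_mul, act_simple, ← ih]
      rfl
    rw [eta, h, h]
    simp only [step]
    ext
    · simp [mul_assoc]
    · simp [add_assoc]

lemma eta_mul (a b x : W) :
    eta cs hra (a * b) x = eta cs hra b x + eta cs hra a (b * x * b⁻¹) := by
  have : act cs hra (a * b) (x, 0) = act cs hra a (act cs hra b (x, 0)) := by
    rw [map_mul]; rfl
  rw [eta, this, act_apply, act_apply]
  simp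

open Classical in
lemma eta_simple (i : B) (x : W) :
    eta cs hra (cs.simple i) x = if x = cs.simple i then 1 else 0 := by
  rw [eta, act_simple]
  simp [step, ind]

lemma eta_one (x : W) : eta cs hra 1 x = 0 := by
  simp [eta, Function.End.one_def]

lemma mem_rightInvSeq_of_eta_ne_zero (ω : List B) (x : W)
    (h : eta cs hra (cs.wordProd ω) x ≠ 0) : x ∈ cs.rightInvSeq ω := by
  induction ω with
  | nil => simp [eta_one] at h
  | cons i ω ih =>
    rw [cs.wordProd_cons, eta_mul, eta_simple] at h
    simp only [rightInvSeq, List.mem_cons]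
    by_cases hx : cs.wordProd ω * x * (cs.wordProd ω)⁻¹ = cs.simple i
    · left; rw [← hx]; group
    · right; apply ih; simpa [hx] using h

lemma length_mul_lt_of_eta_ne_zero (w x : W) (h : eta cs hra w x ≠ 0) :
    cs.length (w * x) < cs.length w := by
  obtain ⟨ω, hω, rfl⟩ := cs.exists_isReduced w
  exact (cs.isRightInversion_of_mem_rightInvSeq hω
    (mem_rightInvSeq_of_eta_ne_zero cs hra ω x h)).2

/-- The cocycle detects right descents. -/
lemma isRightDescent_iff_eta (w : W) (i : B) :
    cs.IsRightDescent w i ↔ eta cs hra w (cs.simple i) ≠ 0 := by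
  refine ⟨fun h h0 => ?_, length_mul_lt_of_eta_ne_zero cs hra w _⟩
  -- otherwise `i` would be a descent of `w * s i` as well
  have : eta cs hra (w * cs.simple i) (cs.simple i) ≠ 0 := by
    rw [eta_mul, eta_simple]
    simp [h0]
  exact (cs.isRightDescent_iff_not_isRightDescent_mul.mp h)
    (length_mul_lt_of_eta_ne_zero cs hra _ _ this)

/-! ### Faithfulness of generators and infinite dihedral subgroups -/

include hra in
/-- Distinct generators are distinguished by the homomorphism to `ℤ/2` counting occurrences of one
of them. -/
lemma simple_inj {i j : B} (h : cs.simple i = cs.simple j) : i = j := by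
  classical
  by_contra hij
  let f : B → Multiplicative (ZMod 2) := fun k => if k = i then Multiplicative.ofAdd 1 else 1
  have hsq : ∀ x : Multiplicative (ZMod 2), x ^ 2 = 1 := by decide
  have hf : M.IsLiftable f := by
    intro a b
    by_cases hab : a = b
    · subst hab; rw [M.diagonal, pow_one, ← pow_two, hsq]
    · rcases hra a b hab with h | h <;> simp [h, hsq]
  have := congrArg (cs.lift ⟨f, hf⟩) h
  rw [cs.lift_apply_simple, cs.lift_apply_simple] at this
  have hji : j ≠ i := fun h => hij h.symm
  simp only [f, if_true, hji, if_false] at this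
  exact absurd this (by decide)

include hra in
/-- If `m(i, j) = ∞` then `s i * s j` has infinite order, since `W` maps onto the infinite dihedral
group by killing all other generators. -/
lemma orderOf_eq_zero_of_M {i j : B} (h : M.M i j = 0) :
    orderOf (cs.simple i * cs.simple j) = 0 := by
  classical
  have hji : j ≠ i := by
    rintro rfl; rw [M.diagonal] at h; exact one_ne_zero h
  let f : B → DihedralGroup 0 := fun k =>
    if k = i then DihedralGroup.sr 0 else if k = j then DihedralGroup.sr 1 else 1
  have hsq : ∀ k, f k * f k = 1 := by
    intro k; simp only [f]; split_ifs <;> simp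
  have hf : M.IsLiftable f := by
    intro a b
    by_cases hab : a = b
    · subst hab; rw [M.diagonal, pow_one, hsq]
    · rcases hra a b hab with hm | hm
      · have : f a = 1 ∨ f b = 1 := by
          by_contra! hne
          have hi : ∀ k, f k ≠ 1 → k = i ∨ k = j := by
            intro k hk; by_contra! hk'; exact hk (by simp [f, hk'.1, hk'.2])
          have hs := M.symmetric i j
          rcases hi a hne.1 with rfl | rfl <;> rcases hi b hne.2 with rfl | rfl <;> simp_all
        rw [hm, pow_two]
        rcases this with h1 | h1 <;> simp [h1, hsq]
      · rw [hm, pow_zero]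
  have hd := orderOf_map_dvd (cs.lift ⟨f, hf⟩) (cs.simple i * cs.simple j)
  rw [map_mul, cs.lift_apply_simple, cs.lift_apply_simple] at hd
  have : f i * f j = DihedralGroup.r 1 := by simp [f, hji]
  rw [this, DihedralGroup.orderOf_r_one] at hd
  exact Nat.eq_zero_of_zero_dvd hd

/-- In an infinite dihedral subgroup `⟨s, u⟩`, the elements `(u s)ʲ u` with `j < 0` are not among
the inversions of `(s u)ᵏ`. -/
lemma eta_pow_eq_zero {i j : B} (h : M.M j i = 0) (k : ℕ) (m : ℤ) (hm : m < 0) :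
    eta cs hra ((cs.simple i * cs.simple j) ^ k)
      ((cs.simple j * cs.simple i) ^ m * cs.simple j) = 0 := by
  have hinj : ∀ z : ℤ, (cs.simple j * cs.simple i) ^ z = 1 → z = 0 := by
    intro z hz
    have := orderOf_eq_zero_of_M cs hra h
    rw [orderOf_eq_zero_iff, ← injective_zpow_iff_not_isOfFinOrder] at this
    exact this (by simpa using hz)
  induction k generalizing m with
  | zero => simp [eta_one]
  | succ k ih =>
    have hinv : (cs.simple i * cs.simple j) = (cs.simple j * cs.simple i)⁻¹ := by simp
    have e1 : (cs.simple j * cs.simple i) ^ m * cs.simple j ≠ cs.simple j := by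
      intro h'
      have := hinj m (by simpa using h')
      omega
    have e2 : cs.simple j * ((cs.simple j * cs.simple i) ^ m * cs.simple j) * (cs.simple j)⁻¹
        ≠ cs.simple i := by
      intro h'
      have h2 : (cs.simple j * cs.simple i) ^ m = cs.simple j * cs.simple i := by
        have := congrArg (fun y => cs.simple j * y) h'
        simpa [mul_assoc] using this
      have := hinj (m - 1) (by rw [zpow_sub_one, h2]; group)
      omega
    have e3 : (cs.simple i * cs.simple j) * ((cs.simple j * cs.simple i) ^ m * cs.simple j) *
        (cs.simple i * cs.simple j)⁻¹ = (cs.simple j * cs.simple i) ^ (m - 2) * cs.simple j := by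
      have h2 : cs.simple j * (cs.simple i * cs.simple j)⁻¹ =
          (cs.simple j * cs.simple i)⁻¹ * cs.simple j := by simp [mul_assoc]
      rw [← mul_assoc, mul_assoc, h2, hinv]
      rw [show m - 2 = -1 + m + -1 by ring, zpow_add, zpow_add, zpow_neg_one]
      group
    rw [pow_succ, eta_mul, e3, ih _ (by omega), eta_mul, eta_simple, eta_simple, if_neg e1,
      if_neg e2]
    simp

lemma mem_closure_pair {i j : B} {a : W}
    (ha : a ∈ Subgroup.closure {cs.simple i, cs.simple j}) :
    ∃ k : ℤ, a = (cs.simple i * cs.simple j) ^ k ∨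
      a = (cs.simple i * cs.simple j) ^ k * cs.simple i := by
  have hi : ∀ a, (∃ k : ℤ, a = (cs.simple i * cs.simple j) ^ k ∨
      a = (cs.simple i * cs.simple j) ^ k * cs.simple i) →
      ∃ k : ℤ, a * cs.simple i = (cs.simple i * cs.simple j) ^ k ∨
      a * cs.simple i = (cs.simple i * cs.simple j) ^ k * cs.simple i := by
    rintro a ⟨k, rfl | rfl⟩
    · exact ⟨k, Or.inr rfl⟩
    · exact ⟨k, Or.inl (by simp)⟩
  have hj : ∀ a, (∃ k : ℤ, a = (cs.simple i * cs.simple j) ^ k ∨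
      a = (cs.simple i * cs.simple j) ^ k * cs.simple i) →
      ∃ k : ℤ, a * cs.simple j = (cs.simple i * cs.simple j) ^ k ∨
      a * cs.simple j = (cs.simple i * cs.simple j) ^ k * cs.simple i := by
    rintro a ⟨k, rfl | rfl⟩
    · refine ⟨k - 1, Or.inr ?_⟩
      rw [zpow_sub_one]; simp [mul_assoc]
    · refine ⟨k + 1, Or.inl ?_⟩
      rw [zpow_add_one]; simp [mul_assoc]
  induction ha using Subgroup.closure_induction_right with
  | one => exact ⟨0, Or.inl (by simp)⟩
  | mul_right x hx y hy ih =>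
    rcases hy with rfl | rfl
    · exact hi _ ih
    · exact hj _ ih
  | mul_inv_cancel x hx y hy ih =>
    rcases hy with rfl | rfl
    · rw [cs.inv_simple]; exact hi _ ih
    · rw [cs.inv_simple]; exact hj _ ih

/-- An element of an infinite dihedral subgroup `⟨s, u⟩` does not have both `s` and `u` as
inversions. -/
lemma eta_dihedral {i j : B} (h : M.M i j = 0) {a : W}
    (ha : a ∈ Subgroup.closure {cs.simple i, cs.simple j}) :
    eta cs hra a (cs.simple i) = 0 ∨ eta cs hra a (cs.simple j) = 0 := by
  have h' : M.M j i = 0 := by rw [← h]; exact M.symmetric j i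
  have hne : cs.simple i ≠ cs.simple j := by
    intro he
    have := simple_inj cs hra he
    subst this
    rw [M.diagonal] at h; exact one_ne_zero h
  -- `s` and `s u s` are the elements `(u s)ʲ u` for `j = -1` and `j = -2`
  have A : ∀ {i j : B}, M.M j i = 0 → ∀ k : ℕ,
      eta cs hra ((cs.simple i * cs.simple j) ^ k) (cs.simple i) = 0 := by
    intro i j h k
    have := eta_pow_eq_zero cs hra h k (-1) (by norm_num)
    rwa [show (cs.simple j * cs.simple i) ^ (-1 : ℤ) * cs.simple j = cs.simple i by
      simp [mul_assoc]] at this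
  have C : ∀ {i j : B}, M.M j i = 0 → cs.simple i ≠ cs.simple j → ∀ k : ℕ,
      eta cs hra ((cs.simple i * cs.simple j) ^ k * cs.simple i) (cs.simple j) = 0 := by
    intro i j h hne k
    have := eta_pow_eq_zero cs hra h k (-2) (by norm_num)
    rw [eta_mul, eta_simple, if_neg hne.symm, zero_add, ← this]
    congr 1
    rw [show (-2 : ℤ) = -1 + -1 by norm_num, zpow_add, zpow_neg_one]
    simp [mul_assoc]
  have hinv : (cs.simple i * cs.simple j) = (cs.simple j * cs.simple i)⁻¹ := by simp
  obtain ⟨k, rfl | rfl⟩ := mem_closure_pair cs ha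
  · rcases Int.le_total 0 k with hk | hk
    · obtain ⟨k, rfl⟩ := Int.eq_ofNat_of_zero_le hk
      left; simpa using A h' k
    · obtain ⟨k, rfl⟩ := Int.exists_eq_neg_ofNat hk
      right
      rw [hinv, inv_zpow, zpow_neg, inv_inv, zpow_natCast]
      exact A h k
  · rcases lt_or_ge k 0 with hk | hk
    · obtain ⟨m, rfl⟩ : ∃ m : ℕ, k = -(m + 1 : ℤ) := ⟨(-k - 1).toNat, by omega⟩
      left
      have : (cs.simple i * cs.simple j) ^ (-(m + 1 : ℤ)) * cs.simple i =
          (cs.simple j * cs.simple i) ^ m * cs.simple j := by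
        rw [hinv, inv_zpow, zpow_neg, inv_inv, zpow_add_one, zpow_natCast]
        simp [mul_assoc]
      rw [this]
      exact C h hne.symm m
    · obtain ⟨k, rfl⟩ := Int.eq_ofNat_of_zero_le hk
      right; simpa using C h' hne k

/-! ### Descents of an ascent -/

include hra in
/-- Two right descents of the same element cannot generate an infinite dihedral group. -/
lemma not_both_descent {i j : B} (h : M.M i j = 0) (v : W) (hi : cs.IsRightDescent v i)
    (hj : cs.IsRightDescent v j) : False := by
  rw [isRightDescent_iff_eta cs hra] at hi hj
  let D := Subgroup.closure {cs.simple i, cs.simple j}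
  -- `v * f` has minimal length in the coset `v D`
  obtain ⟨f, hf⟩ : ∃ f : D, ∀ g : D, cs.length (v * f) ≤ cs.length (v * g) :=
    ⟨_, fun g => Function.argmin_le (fun f : D => cs.length (v * f)) g⟩
  have hmin : ∀ x ∈ D, eta cs hra (v * f) x = 0 := by
    intro x hx
    by_contra hne
    have h1 := length_mul_lt_of_eta_ne_zero cs hra _ _ hne
    have h2 := hf (f * ⟨x, hx⟩)
    simp only [Subgroup.coe_mul, ← mul_assoc] at h2
    omega
  have hred : ∀ x ∈ D, eta cs hra v x = eta cs hra (f⁻¹ : W) x := by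
    intro x hx
    have hv : v = (v * f) * (f : W)⁻¹ := by group
    conv_lhs => rw [hv]
    rw [eta_mul, hmin _ (D.mul_mem (D.mul_mem (D.inv_mem f.2) hx) (D.inv_mem (D.inv_mem f.2)))]
    simp
  rw [hred _ (Subgroup.subset_closure (by simp))] at hi hj
  rcases eta_dihedral cs hra h (D.inv_mem f.2) with h0 | h0
  · exact hi h0
  · exact hj h0

include hra in
/-- Descents of `w s` other than `s`, when `s` is not a descent of `w`. -/
lemma descent_mul_simple {w : W} {i u : B} (hi : ¬ cs.IsRightDescent w i)
    (hu : cs.IsRightDescent (w * cs.simple i) u) (hne : u ≠ i) :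
    M.M u i = 2 ∧ cs.IsRightDescent w u := by
  have hi' : cs.IsRightDescent (w * cs.simple i) i := by
    rw [cs.isRightDescent_iff_not_isRightDescent_mul]; simpa using hi
  rcases hra u i hne with h | h
  · refine ⟨h, ?_⟩
    have hsq := cs.simple_mul_simple_pow u i
    rw [h, pow_two] at hsq
    have hc : cs.simple u * cs.simple i = cs.simple i * cs.simple u := by
      have := eq_inv_of_mul_eq_one_left hsq
      simpa using this
    rw [isRightDescent_iff_eta cs hra, eta_mul, eta_simple,
      if_neg (fun he => hne (simple_inj cs hra he)), ← hc] at hu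
    rw [isRightDescent_iff_eta cs hra]
    simpa using hu
  · exact (not_both_descent cs hra h _ hu hi').elim

/-- If `s i * s j` has infinite order then `m(i, j) = ∞`. -/
lemma M_eq_zero {i j : B} (h : orderOf (cs.simple i * cs.simple j) = 0) : M.M i j = 0 := by
  have := orderOf_dvd_of_pow_eq_one (cs.simple_mul_simple_pow i j)
  rw [h] at this
  exact Nat.eq_zero_of_zero_dvd this

end RightAngledDescent

/-! ### Descents along the word -/

/-- Lemma 8.4. Let `(W,S)` be an irreducible right-angled Coxeter
system and `w ∈ W`.  Suppose `t₁, …, t_n ∈ S` are such that `t₁ ∉ S(w)`,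
`o(tᵢtᵢ₊₁) = ∞` for `1 ≤ i ≤ n-1`, and `{t₁, …, t_n} = S`.  Then
`S(w·t₁t₂⋯t_n) = {t_n}`, i.e. `w·t₁⋯t_n ∈ W^{{t_n}}`. -/
theorem descentSet_mul_word_eq_singleton {B W : Type*} [Finite B] [Group W]
    {M : CoxeterMatrix B} (cs : CoxeterSystem M W)
    (hra : M.RightAngled) (hirr : cs.Irreducible)
    (w : W) (n : ℕ) (hn : 1 ≤ n) (t : ℕ → B)
    (h1 : ¬ cs.IsRightDescent w (t 1))
    (h2 : ∀ i : ℕ, 1 ≤ i → i < n →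
      orderOf (cs.simple (t i) * cs.simple (t (i + 1))) = 0)
    (h3 : {b : B | ∃ i : ℕ, 1 ≤ i ∧ i ≤ n ∧ t i = b} = Set.univ) :
    descentSet cs (w * cs.wordProd ((List.range n).map (fun k => t (k + 1)))) =
      {t n} := by
  open RightAngledDescent in
  classical
  let v : ℕ → W := fun k => w * cs.wordProd ((List.range k).map (fun k => t (k + 1)))
  have hv : ∀ k, v (k + 1) = v k * cs.simple (t (k + 1)) := by
    intro k
    simp [v, List.range_succ, cs.wordProd_append, mul_assoc]
  have hM : ∀ i, 1 ≤ i → i < n → M.M (t i) (t (i + 1)) = 0 :=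
    fun i hi hin => M_eq_zero cs (h2 i hi hin)
  have hasc : ∀ k, k < n → ¬ cs.IsRightDescent (v k) (t (k + 1)) := by
    intro k
    induction k with
    | zero => intro _; simpa [v] using h1
    | succ k ih =>
      intro hk hd
      have h0 := hM (k + 1) (by omega) hk
      rw [hv] at hd
      have hne : t (k + 1 + 1) ≠ t (k + 1) := by
        intro he
        rw [he, M.diagonal] at h0
        exact one_ne_zero h0
      have h2' := (descent_mul_simple cs hra (ih (by omega)) hd hne).1
      have hs : M.M (t (k + 1)) (t (k + 1 + 1)) = M.M (t (k + 1 + 1)) (t (k + 1)) :=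
        M.symmetric _ _
      omega
  -- a descent of `v k` is `t k`, or else a letter distinct from all of `t 1, …, t k`
  have hdesc : ∀ k, k ≤ n → ∀ u, cs.IsRightDescent (v k) u → 1 ≤ k → u ≠ t k →
      M.M u (t k) = 2 ∧ ∀ i, 1 ≤ i → i ≤ k → t i ≠ u := by
    intro k
    induction k with
    | zero => intro _ _ _ h; omega
    | succ k ih =>
      intro hk u hu _ hne
      rw [hv] at hu
      obtain ⟨hm, hu'⟩ := descent_mul_simple cs hra (hasc k (by omega)) hu hne
      refine ⟨hm, fun i hi hik => ?_⟩
      rcases Nat.lt_or_ge k i with hlt | hle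
      · obtain rfl : i = k + 1 := by omega
        exact hne.symm
      · have hk1 : 1 ≤ k := by omega
        have hne' : u ≠ t k := by
          rintro rfl
          have := hM k hk1 (by omega)
          omega
        exact (ih (by omega) u hu' hk1 hne').2 i hi hle
  change {i | cs.IsRightDescent (v n) i} = {t n}
  ext u
  simp only [Set.mem_ofPred_eq, Set.mem_singleton_iff]
  constructor
  · intro hu
    by_contra hne
    obtain ⟨i, hi, hin, hiu⟩ : u ∈ {b : B | ∃ i : ℕ, 1 ≤ i ∧ i ≤ n ∧ t i = b} := by
      rw [h3]; trivial
    exact (hdesc n le_rfl u hu hn hne).2 i hi hin hiu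
  · rintro rfl
    obtain ⟨m, rfl⟩ : ∃ m, n = m + 1 := ⟨n - 1, by omega⟩
    rw [hv, cs.isRightDescent_iff_not_isRightDescent_mul]
    simpa using hasc m (by omega)
end

section
/- Let (W,S) be an irreducible right-angled Coxeter system such that W is infinite and W is not isomorphic to the infinite dihedral group ℤ₂ * ℤ₂ (these conditions are equivalent to the paper's hypothesis that the boundary of the Davis complex of (W,S) has more than two points). Then for each w, v ∈ W there exists x ∈ W such that (1) ℓ(x) ≤ 1 and (2) S(wx) ∪ S(vx) ≠ S. -/
namespace RightAngledDescent

open CoxeterSystem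

variable {B W : Type*} [Group W] {M : CoxeterMatrix B}

/-! ### The inversion cocycle -/

/-- The cocycle `n` comes from the action of `W` on `W × ℤ/2` in which a simple reflection `s`
sends `(r, e)` to `(s r s, e + [r = s])`: a general `w` sends `(r, e)` to
`(w r w⁻¹, e + n(w, r))`. -/
theorem exists_inversionCocycle (cs : CoxeterSystem M W) (hra : M.RightAngled) :
    ∃ n : W → W → ZMod 2, (∀ r, n 1 r = 0) ∧ (∀ i, n (cs.simple i) (cs.simple i) = 1) ∧
      (∀ i r, r ≠ cs.simple i → n (cs.simple i) r = 0) ∧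
      (∀ a b r, n (a * b) r = n a (b * r * b⁻¹) + n b r) := by
  classical
  let f : B → Function.End (W × ZMod 2) := fun i p =>
    (cs.simple i * p.1 * cs.simple i, p.2 + if p.1 = cs.simple i then 1 else 0)
  have hsq : ∀ i, f i * f i = 1 := by
    intro i
    funext p
    obtain ⟨r, e⟩ := p
    have h1 : cs.simple i * r * cs.simple i = cs.simple i ↔ r = cs.simple i := by
      constructor
      · intro h
        have := congrArg (fun z => cs.simple i * z * cs.simple i) h
        simpa [mul_assoc] using this
      · rintro rfl
        simp
    change f i (f i (r, e)) = (r, e)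
    simp only [f, h1]
    ext
    · simp [mul_assoc]
    · change e + _ + _ = e
      rw [add_assoc, CharTwo.add_self_eq_zero, add_zero]
  have hf : M.IsLiftable f := by
    intro i j
    by_cases hij : i = j
    · subst hij
      simp [hsq]
    rcases hra i j hij with h | h
    · have hc : cs.simple i * cs.simple j = cs.simple j * cs.simple i := by
        have h2 := cs.simple_mul_simple_pow i j
        rw [h, pow_two] at h2
        have h3 := eq_inv_of_mul_eq_one_left h2
        simpa using h3
      have hcf : f i * f j = f j * f i := by
        funext p
        obtain ⟨r, e⟩ := p
        have key : ∀ a b : B, cs.simple a * cs.simple b = cs.simple b * cs.simple a →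
            (cs.simple a * r * cs.simple a = cs.simple b ↔ r = cs.simple b) := by
          intro a b hab
          constructor
          · intro h
            have h5 := congrArg (fun z => cs.simple a * z * cs.simple a) h
            rw [hab] at h5
            simpa [mul_assoc] using h5
          · rintro rfl
            rw [hab]
            simp
        change f i (f j (r, e)) = f j (f i (r, e))
        simp only [f, key j i hc.symm, key i j hc]
        ext
        · calc cs.simple i * (cs.simple j * r * cs.simple j) * cs.simple i
              = (cs.simple i * cs.simple j) * r * (cs.simple j * cs.simple i) := by group
            _ = (cs.simple j * cs.simple i) * r * (cs.simple i * cs.simple j) := by rw [hc]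
            _ = _ := by group
        · change e + _ + _ = e + _ + _
          exact add_right_comm _ _ _
      rw [h, pow_two]
      calc f i * f j * (f i * f j) = f i * (f j * f i) * f j := by simp only [mul_assoc]
        _ = f i * (f i * f j) * f j := by rw [hcf]
        _ = (f i * f i) * (f j * f j) := by simp only [mul_assoc]
        _ = 1 := by rw [hsq, hsq, one_mul]
    · rw [h, pow_zero]
  let Φ := cs.lift ⟨f, hf⟩
  have hΦ : ∀ i, Φ (cs.simple i) = f i := fun i => cs.lift_apply_simple hf i
  have hform : ∀ w, ∀ r e, Φ w (r, e) = (w * r * w⁻¹, e + (Φ w (r, 0)).2) := by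
    intro w
    induction w using cs.simple_induction_left with
    | one =>
      intro r e
      rw [map_one]
      change (r, e) = (1 * r * 1⁻¹, e + 0)
      simp
    | mul_simple_left w i ih =>
      intro r e
      rw [map_mul, hΦ]
      change f i (Φ w (r, e)) = (_, e + (f i (Φ w (r, 0))).2)
      rw [ih r e, ih r 0]
      simp only [f]
      ext
      · simp [mul_assoc]
      · simp [add_assoc]
  refine ⟨fun w r => (Φ w (r, 0)).2, ?_, ?_, ?_, ?_⟩
  · intro r
    change (Φ 1 (r, 0)).2 = 0
    rw [map_one]
    rfl
  · intro i
    change (Φ (cs.simple i) (cs.simple i, 0)).2 = 1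
    rw [hΦ]
    simp [f]
  · intro i r hr
    change (Φ (cs.simple i) (r, 0)).2 = 0
    rw [hΦ]
    simp [f, hr]
  · intro a b r
    change (Φ (a * b) (r, 0)).2 = (Φ a (b * r * b⁻¹, 0)).2 + (Φ b (r, 0)).2
    rw [map_mul]
    change (Φ a (Φ b (r, 0))).2 = _
    rw [hform b r 0, hform a]
    simp [add_comm]

/-- The properties of the inversion cocycle that determine it. -/
structure IsInversionCocycle (cs : CoxeterSystem M W) (n : W → W → ZMod 2) : Prop where
  one : ∀ r, n 1 r = 0
  simple_self : ∀ i, n (cs.simple i) (cs.simple i) = 1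
  simple_ne : ∀ i r, r ≠ cs.simple i → n (cs.simple i) r = 0
  mul : ∀ a b r, n (a * b) r = n a (b * r * b⁻¹) + n b r

namespace IsInversionCocycle

variable {cs : CoxeterSystem M W} {n : W → W → ZMod 2}

theorem mem_rightInvSeq (hn : IsInversionCocycle cs n) (ω : List B) (r : W)
    (h : n (cs.wordProd ω) r ≠ 0) : r ∈ cs.rightInvSeq ω := by
  induction ω with
  | nil => simp [hn.one] at h
  | cons i ω ih =>
    rw [cs.wordProd_cons, hn.mul] at h
    rw [rightInvSeq, List.mem_cons]
    by_cases h1 : cs.wordProd ω * r * (cs.wordProd ω)⁻¹ = cs.simple i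
    · left
      rw [← h1]
      group
    · rw [hn.simple_ne _ _ h1, zero_add] at h
      exact Or.inr (ih h)

theorem length_mul_lt (hn : IsInversionCocycle cs n) {w r : W} (h : n w r ≠ 0) :
    cs.length (w * r) < cs.length w := by
  obtain ⟨ω, hω, rfl⟩ := cs.exists_isReduced w
  exact (cs.isRightInversion_of_mem_rightInvSeq hω (hn.mem_rightInvSeq ω r h)).2

theorem isRightDescent_iff (hn : IsInversionCocycle cs n) {w : W} {i : B} :
    cs.IsRightDescent w i ↔ n w (cs.simple i) = 1 := by
  have h01 : ∀ x : ZMod 2, x = 0 ∨ x = 1 := by decide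
  constructor
  · intro h
    rcases h01 (n w (cs.simple i)) with h0 | h1
    · have h2 : n (w * cs.simple i) (cs.simple i) = 1 := by
        rw [hn.mul, hn.simple_self]
        simp [h0]
      have h3 := hn.length_mul_lt (w := w * cs.simple i) (r := cs.simple i) (by simp [h2])
      rw [cs.simple_mul_simple_cancel_right] at h3
      exact absurd h (by unfold IsRightDescent; omega)
    · exact h1
  · intro h
    exact hn.length_mul_lt (by simp [h])

end IsInversionCocycle

/-! ### The infinite dihedral group -/

/-- The rotation `r m` of the infinite dihedral group `DihedralGroup 0`, with index in `ℤ` rather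
than in `ZMod 0`. -/
def rot (m : ℤ) : DihedralGroup 0 := DihedralGroup.r m

/-- The reflection `sr m` of the infinite dihedral group `DihedralGroup 0`, with index in `ℤ`
rather than in `ZMod 0`. -/
def sr (m : ℤ) : DihedralGroup 0 := DihedralGroup.sr m

theorem rot_or_sr (x : DihedralGroup 0) : (∃ m, x = rot m) ∨ ∃ m, x = sr m := by
  rcases x with m | m
  · exact Or.inl ⟨m, rfl⟩
  · exact Or.inr ⟨m, rfl⟩

theorem sr_mul_rot (a b : ℤ) : sr a * rot b = sr (a + b) := rfl

theorem sr_mul_sr (a b : ℤ) : sr a * sr b = rot (b - a) := rfl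

theorem rot_mul_sr (a b : ℤ) : rot a * sr b = sr (b - a) := rfl

theorem rot_zero : rot 0 = 1 := rfl

theorem rot_one_zpow (m : ℤ) : rot 1 ^ m = rot m := DihedralGroup.r_one_zpow m

theorem sr_injective : Function.Injective sr := fun _ _ h => DihedralGroup.sr.inj h

/-! ### Generators with `m(s,t) = ∞` -/

/-- The alternating product `a * b * a * ⋯` with `k` factors. -/
def alternating : ℕ → W → W → W
  | 0, _, _ => 1
  | k + 1, a, b => a * alternating k b a

/-- The retraction onto the infinite dihedral group generated by `i` and `j`, killing all other
generators. -/
theorem exists_hom_dihedral (cs : CoxeterSystem M W) (hra : M.RightAngled) {i j : B}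
    (hij : i ≠ j) (h0 : M.M i j = 0) :
    ∃ φ : W →* DihedralGroup 0, φ (cs.simple i) = sr 0 ∧
      φ (cs.simple j) = sr 1 := by
  classical
  let f : B → DihedralGroup 0 := fun k =>
    if k = i then sr 0 else if k = j then sr 1 else 1
  have hsq : ∀ k, f k * f k = 1 := by
    intro k
    simp only [f]
    split_ifs <;> simp [sr_mul_sr, rot_zero]
  have hf : M.IsLiftable f := by
    intro a b
    by_cases hab : a = b
    · subst hab
      simp [hsq]
    rcases hra a b hab with h | h
    · by_cases ha : f a = 1
      · simp [ha, h, pow_two, hsq]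
      by_cases hb : f b = 1
      · simp [hb, h, pow_two, hsq]
      have ha' : a = i ∨ a = j := by
        by_contra hc
        push Not at hc
        exact ha (by simp [f, hc])
      have hb' : b = i ∨ b = j := by
        by_contra hc
        push Not at hc
        exact hb (by simp [f, hc])
      have h0' : M.M j i = 0 := by rw [M.symmetric]; exact h0
      exfalso
      rcases ha' with rfl | rfl <;> rcases hb' with rfl | rfl <;> simp_all
    · rw [h, pow_zero]
  refine ⟨cs.lift ⟨f, hf⟩, ?_, ?_⟩
  · rw [cs.lift_apply_simple hf]
    simp [f]
  · rw [cs.lift_apply_simple hf]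
    simp [f, hij.symm]

/-- No inversion of the alternating product `⋯ t s` lies on the side of `t`. The two sides are told
apart by the image in the infinite dihedral group, where `s = sr 0` and `t = sr 1`: reflections
`sr x` with `x ≥ 1` are on the side of `t`, those with `x ≤ 0` on the side of `s`. -/
theorem cocycle_alternating {cs : CoxeterSystem M W} {n : W → W → ZMod 2}
    (hn : IsInversionCocycle cs n) {i j : B} (φ : W →* DihedralGroup 0)
    (hi : φ (cs.simple i) = sr 0)
    (hj : φ (cs.simple j) = sr 1) (k : ℕ) :
    (∀ (r : W) (x : ℤ), φ r = sr x → 1 ≤ x →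
      n (alternating k (cs.simple i) (cs.simple j))⁻¹ r = 0) ∧
    (∀ (r : W) (x : ℤ), φ r = sr x → x ≤ 0 →
      n (alternating k (cs.simple j) (cs.simple i))⁻¹ r = 0) := by
  have hconj : ∀ a x : ℤ, sr a * sr x * sr a = sr (2 * a - x) := by
    intro a x
    rw [sr_mul_sr, rot_mul_sr]
    congr 1
    ring
  induction k with
  | zero => simp [alternating, hn.one]
  | succ k ih =>
    refine ⟨fun r x hr hx => ?_, fun r x hr hx => ?_⟩
    · rw [alternating, mul_inv_rev, cs.inv_simple, hn.mul, cs.inv_simple,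
        ih.2 _ (2 * 0 - x) (by rw [map_mul, map_mul, hi, hr, hconj]) (by omega), zero_add]
      refine hn.simple_ne _ _ ?_
      rintro rfl
      have := sr_injective (hi.symm.trans hr)
      omega
    · rw [alternating, mul_inv_rev, cs.inv_simple, hn.mul, cs.inv_simple,
        ih.1 _ (2 * 1 - x) (by rw [map_mul, map_mul, hj, hr, hconj]) (by omega), zero_add]
      refine hn.simple_ne _ _ ?_
      rintro rfl
      have := sr_injective (hj.symm.trans hr)
      omega

/-- If `s a` is obtained from the alternating product `a` by putting the other generator `s` in
front, then `s` is a descent of `w` but not an inversion of `a⁻¹`, so the cocycle relation for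
`w = (w a) a⁻¹` makes `a⁻¹ s a` an inversion of `w a`, that is, `ℓ(w s a) < ℓ(w a)`. -/
theorem length_mul_alternating_add_le {cs : CoxeterSystem M W} {n : W → W → ZMod 2}
    (hn : IsInversionCocycle cs n) (hra : M.RightAngled) (w : W) (k : ℕ) :
    ∀ i j : B, i ≠ j → M.M i j = 0 → cs.IsRightDescent w i → cs.IsRightDescent w j →
      cs.length (w * alternating k (cs.simple i) (cs.simple j)) + k ≤ cs.length w := by
  induction k with
  | zero => simp [alternating]
  | succ k ih =>
    intro j i hji h0 hj hi
    have h0' : M.M i j = 0 := by rw [M.symmetric]; exact h0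
    have h1 := ih i j hji.symm h0' hi hj
    obtain ⟨φ, hφi, hφj⟩ := exists_hom_dihedral cs hra hji.symm h0'
    have h2 := (cocycle_alternating hn φ hφi hφj k).1 (cs.simple j) 1 hφj le_rfl
    rw [alternating]
    set a := alternating k (cs.simple i) (cs.simple j)
    have h3 : n (w * a * a⁻¹) (cs.simple j) = 1 := by
      rw [mul_inv_cancel_right]
      exact hn.isRightDescent_iff.1 hj
    rw [hn.mul, h2, add_zero] at h3
    have h4 := hn.length_mul_lt (w := w * a) (r := a⁻¹ * cs.simple j * a⁻¹⁻¹) (by rw [h3]; exact one_ne_zero)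
    have h5 : w * a * (a⁻¹ * cs.simple j * a⁻¹⁻¹) = w * (cs.simple j * a) := by group
    rw [h5] at h4
    omega

/-! ### Descents in right-angled Coxeter groups -/

theorem not_both_descents (cs : CoxeterSystem M W) (hra : M.RightAngled) {w : W} {i j : B}
    (hij : i ≠ j) (h0 : M.M i j = 0) (hi : cs.IsRightDescent w i) : ¬ cs.IsRightDescent w j := by
  intro hj
  obtain ⟨n, h1, h2, h3, h4⟩ := exists_inversionCocycle cs hra
  have := length_mul_alternating_add_le ⟨h1, h2, h3, h4⟩ hra w (cs.length w + 1) i j hij h0 hi hj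
  omega

theorem simple_commute (cs : CoxeterSystem M W) {i j : B} (h : M.M i j = 2) :
    cs.simple i * cs.simple j = cs.simple j * cs.simple i := by
  have h2 := cs.simple_mul_simple_pow i j
  rw [h, pow_two] at h2
  simpa using eq_inv_of_mul_eq_one_left h2

theorem simple_ne (cs : CoxeterSystem M W) (hra : M.RightAngled) {i j : B} (hij : i ≠ j) :
    cs.simple i ≠ cs.simple j := by
  classical
  -- The letter `i` has a well-defined parity, given by a homomorphism to `ℤ/2`.
  let f : B → Multiplicative (ZMod 2) := fun k => if k = i then Multiplicative.ofAdd 1 else 1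
  have hsq : ∀ k, f k * f k = 1 := by
    intro k
    simp only [f]
    split_ifs <;> decide
  have hf : M.IsLiftable f := by
    intro a b
    by_cases hab : a = b
    · subst hab
      simp [hsq]
    rcases hra a b hab with h | h
    · rw [h, pow_two, mul_mul_mul_comm, hsq, hsq, one_mul]
    · rw [h, pow_zero]
  intro h
  have h1 := congrArg (cs.lift ⟨f, hf⟩) h
  rw [cs.lift_apply_simple hf, cs.lift_apply_simple hf] at h1
  simp only [f, if_true, if_neg hij.symm] at h1
  exact absurd h1 (by decide)

theorem descent_mul_of_commute (cs : CoxeterSystem M W) (hra : M.RightAngled) {w : W} {i j : B}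
    (hij : i ≠ j) (h2 : M.M i j = 2) (hj : cs.IsRightDescent w j) :
    cs.IsRightDescent (w * cs.simple i) j := by
  obtain ⟨n, h1, h2', h3, h4⟩ := exists_inversionCocycle cs hra
  have hn : IsInversionCocycle cs n := ⟨h1, h2', h3, h4⟩
  rw [hn.isRightDescent_iff] at hj ⊢
  rw [hn.mul, hn.simple_ne i _ (simple_ne cs hra hij.symm), simple_commute cs h2,
    mul_inv_cancel_right, hj, add_zero]

theorem descent_mul_self (cs : CoxeterSystem M W) {w : W} {i : B}
    (hi : ¬ cs.IsRightDescent w i) : cs.IsRightDescent (w * cs.simple i) i := by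
  rw [cs.not_isRightDescent_iff] at hi
  unfold IsRightDescent
  rw [cs.simple_mul_simple_cancel_right]
  omega

/-! ### Irreducibility and the dihedral case -/

/-- In an irreducible system, no nonempty proper set of generators commutes with its complement:
the retraction of `W` killing `T` shows that `W_T` and `W_{S∖T}` meet trivially. -/
theorem eq_univ_of_commute (cs : CoxeterSystem M W) (hra : M.RightAngled)
    (hirr : cs.Irreducible) (T : Set B) (hT : T.Nonempty)
    (h : ∀ i ∈ T, ∀ j ∉ T, M.M i j = 2) : T = Set.univ := by
  classical
  by_contra hne
  refine hirr ⟨T, hT, hne, ?_, ?_, ?_⟩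
  · intro g hg k hk
    have h1 : Subgroup.closure (cs.simple '' Tᶜ) ≤ Subgroup.centralizer (cs.simple '' T) := by
      rw [Subgroup.closure_le]
      rintro _ ⟨j, hj, rfl⟩
      rw [SetLike.mem_coe, Subgroup.mem_centralizer_iff]
      rintro _ ⟨i, hi, rfl⟩
      exact simple_commute cs (h i hi j hj)
    have h2 : Subgroup.closure (cs.simple '' T) ≤
        Subgroup.centralizer (Subgroup.closure (cs.simple '' Tᶜ) : Set W) := by
      rw [Subgroup.closure_le]
      intro x hx
      rw [SetLike.mem_coe, Subgroup.mem_centralizer_iff]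
      intro y hy
      exact (Subgroup.mem_centralizer_iff.1 (h1 hy) x hx).symm
    exact (Subgroup.mem_centralizer_iff.1 (h2 hg) k hk).symm
  · let f : B → W := fun k => if k ∈ T then 1 else cs.simple k
    have hsq : ∀ k, f k * f k = 1 := by
      intro k
      simp only [f]
      split_ifs <;> simp
    have hf : M.IsLiftable f := by
      intro a b
      by_cases hab : a = b
      · subst hab
        simp [hsq]
      rcases hra a b hab with h2 | h2
      · by_cases ha : a ∈ T
        · simp [show f a = 1 by simp [f, ha], h2, pow_two, hsq]
        by_cases hb : b ∈ T
        · simp [show f b = 1 by simp [f, hb], h2, pow_two, hsq]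
        simp only [f, ha, hb, if_false]
        exact cs.simple_mul_simple_pow a b
      · rw [h2, pow_zero]
    let ψ := cs.lift ⟨f, hf⟩
    have hψ : ∀ k, ψ (cs.simple k) = f k := fun k => cs.lift_apply_simple hf k
    rw [eq_bot_iff]
    rintro x ⟨hx1, hx2⟩
    have h1 : Subgroup.closure (cs.simple '' T) ≤ ψ.ker := by
      rw [Subgroup.closure_le]
      rintro _ ⟨i, hi, rfl⟩
      rw [SetLike.mem_coe, MonoidHom.mem_ker, hψ]
      simp [f, hi]
    have h2 : Subgroup.closure (cs.simple '' Tᶜ) ≤ ψ.eqLocus (MonoidHom.id W) := by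
      rw [Subgroup.closure_le]
      rintro _ ⟨i, hi, rfl⟩
      change ψ (cs.simple i) = cs.simple i
      rw [hψ]
      simp [f, show i ∉ T from hi]
    have h3 : ψ x = 1 := h1 hx1
    have h4 : ψ x = x := h2 hx2
    rw [Subgroup.mem_bot, ← h4, h3]
  · rw [← Subgroup.closure_union, ← Set.image_union, Set.union_compl_self, Set.image_univ]
    exact cs.subgroup_closure_range_simple

theorem exists_eq_zero (cs : CoxeterSystem M W) (hra : M.RightAngled)
    (hirr : cs.Irreducible) (hinf : Infinite W) : ∃ i j : B, i ≠ j ∧ M.M i j = 0 := by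
  have hB : Nonempty B := by
    by_contra hB
    rw [not_nonempty_iff] at hB
    have : ∀ w : W, w = 1 := by
      intro w
      induction w using cs.simple_induction_left with
      | one => rfl
      | mul_simple_left w i ih => exact hB.elim i
    have : Subsingleton W := ⟨fun a b => (this a).trans (this b).symm⟩
    exact not_finite W
  obtain ⟨i⟩ := hB
  by_contra! hcon
  have hT := eq_univ_of_commute cs hra hirr {i} ⟨i, rfl⟩ (by
    rintro a rfl j hj
    have : a ≠ j := fun h => hj h.symm
    exact (hra a j this).resolve_right (hcon a j this))
  have hall : ∀ w : W, w ∈ ({1, cs.simple i} : Set W) := by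
    intro w
    induction w using cs.simple_induction_left with
    | one => simp
    | mul_simple_left w k ih =>
      have hk : k = i := by
        have : k ∈ ({i} : Set B) := hT ▸ Set.mem_univ k
        exact this
      subst hk
      rcases ih with rfl | rfl <;> simp
  have : (Set.univ : Set W).Finite := (Set.toFinite {1, cs.simple i}).subset fun w _ => hall w
  exact Set.infinite_univ this

theorem nonempty_equiv_dihedral (cs : CoxeterSystem M W) (hra : M.RightAngled) {i j : B}
    (hij : i ≠ j) (h0 : M.M i j = 0) (hB : ∀ k, k = i ∨ k = j) :
    Nonempty (W ≃* DihedralGroup 0) := by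
  obtain ⟨φ, hi, hj⟩ := exists_hom_dihedral cs hra hij h0
  let c := cs.simple i * cs.simple j
  have hc : ∀ m : ℤ, c ^ (1 + m) = cs.simple i * (cs.simple j * c ^ m) := by
    intro m
    rw [zpow_add, zpow_one, mul_assoc]
  -- The inverse of `φ`.
  let g : DihedralGroup 0 → W := fun x =>
    match x with
    | DihedralGroup.r m => c ^ (show ℤ from m)
    | DihedralGroup.sr m => cs.simple i * c ^ (show ℤ from m)
  have hgr : ∀ m, g (rot m) = c ^ m := fun _ => rfl
  have hgs : ∀ m, g (sr m) = cs.simple i * c ^ m := fun _ => rfl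
  have hgi : ∀ x, g (sr 0 * x) = cs.simple i * g x := by
    intro x
    rcases rot_or_sr x with ⟨m, rfl⟩ | ⟨m, rfl⟩
    · rw [sr_mul_rot, zero_add, hgs, hgr]
    · rw [sr_mul_sr, sub_zero, hgs, hgr, cs.simple_mul_simple_cancel_left]
  have hgj : ∀ x, g (sr 1 * x) = cs.simple j * g x := by
    intro x
    rcases rot_or_sr x with ⟨m, rfl⟩ | ⟨m, rfl⟩
    · rw [sr_mul_rot, hgs, hgr, hc, cs.simple_mul_simple_cancel_left]
    · obtain ⟨l, rfl⟩ : ∃ l : ℤ, m = 1 + l := ⟨m - 1, by ring⟩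
      rw [sr_mul_sr, add_sub_cancel_left, hgs, hgr, hc, cs.simple_mul_simple_cancel_left,
        cs.simple_mul_simple_cancel_left]
  have hg1 : g 1 = 1 := zpow_zero c
  have hleft : ∀ w, g (φ w) = w := by
    intro w
    induction w using cs.simple_induction_left with
    | one => rw [map_one, hg1]
    | mul_simple_left w k ih =>
      rw [map_mul]
      rcases hB k with rfl | rfl
      · rw [hi, hgi, ih]
      · rw [hj, hgj, ih]
  have hφc : ∀ m : ℤ, φ (c ^ m) = rot m := by
    intro m
    have h1 : φ c = rot 1 := by rw [map_mul, hi, hj, sr_mul_sr, sub_zero]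
    rw [map_zpow, h1, rot_one_zpow]
  refine ⟨MulEquiv.ofBijective φ ⟨Function.LeftInverse.injective hleft, fun x => ?_⟩⟩
  rcases rot_or_sr x with ⟨m, rfl⟩ | ⟨m, rfl⟩
  · exact ⟨c ^ m, hφc m⟩
  · exact ⟨cs.simple i * c ^ m, by rw [map_mul, hi, hφc, sr_mul_rot, zero_add]⟩

/-! ### The covering argument -/

theorem eq_two_of_cover (cs : CoxeterSystem M W) (hra : M.RightAngled) {w v : W}
    (h1 : ∀ k, cs.IsRightDescent w k ∨ cs.IsRightDescent v k)
    (hs : ∀ i k, cs.IsRightDescent (w * cs.simple i) k ∨ cs.IsRightDescent (v * cs.simple i) k)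
    {i j k : B} (hij : i ≠ j) (h0 : M.M i j = 0)
    (hj : cs.IsRightDescent v j) (hki : k ≠ i) (hkj : k ≠ j) : M.M j k = 2 := by
  refine (hra j k hkj.symm).resolve_right fun hjk => ?_
  have h0' : M.M j i = 0 := by rw [M.symmetric]; exact h0
  have hiv : ¬ cs.IsRightDescent v i := not_both_descents cs hra hij.symm h0' hj
  have hi := (h1 i).resolve_right hiv
  have hkv : ¬ cs.IsRightDescent v k := not_both_descents cs hra hkj.symm hjk hj
  have hk := (h1 k).resolve_right hkv
  have hik : M.M i k = 2 := (hra i k hki.symm).resolve_right fun h =>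
    not_both_descents cs hra hki.symm h hi hk
  have hjw := (hs i j).resolve_right
    (not_both_descents cs hra hij h0 (descent_mul_self cs hiv))
  exact not_both_descents cs hra hkj.symm hjk hjw
    (descent_mul_of_commute cs hra hki.symm hik hk)

end RightAngledDescent

/-- Lemma 8.5. Let `(W,S)` be an irreducible right-angled Coxeter
system with `W` infinite and `W` not isomorphic to the infinite dihedral group
`ℤ₂ * ℤ₂` (equivalently, `|∂Σ(W,S)| > 2`).  Then for all `w, v ∈ W` there is `x ∈ W`
with `ℓ(x) ≤ 1` and `S(wx) ∪ S(vx) ≠ S`. -/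
theorem exists_short_mul_descent_ne_univ {B W : Type*} [Finite B] [Group W]
    {M : CoxeterMatrix B} (cs : CoxeterSystem M W)
    (hra : M.RightAngled) (hirr : cs.Irreducible)
    (hinf : Infinite W) (hdih : IsEmpty (W ≃* DihedralGroup 0)) :
    ∀ w v : W, ∃ x : W, cs.length x ≤ 1 ∧
      descentSet cs (w * x) ∪ descentSet cs (v * x) ≠ Set.univ := by
  intro w v
  by_contra! hcon
  have key : ∀ x : W, cs.length x ≤ 1 → ∀ k, cs.IsRightDescent (w * x) k ∨
      cs.IsRightDescent (v * x) k := by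
    intro x hx k
    have h : k ∈ descentSet cs (w * x) ∪ descentSet cs (v * x) := by
      rw [hcon x hx]
      exact Set.mem_univ k
    exact h
  have h1 : ∀ k, cs.IsRightDescent w k ∨ cs.IsRightDescent v k := by
    simpa using key 1 (by simp)
  have hs : ∀ i k, cs.IsRightDescent (w * cs.simple i) k ∨
      cs.IsRightDescent (v * cs.simple i) k := fun i => key _ (cs.length_simple i).le
  obtain ⟨i, j, hij, h0⟩ := RightAngledDescent.exists_eq_zero cs hra hirr hinf
  -- Up to exchanging `i` and `j`, the generator `j` is a descent of `v`.
  wlog hj : cs.IsRightDescent v j generalizing i j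
  · have hjw := (h1 j).resolve_right hj
    have h0' : M.M j i = 0 := by rw [M.symmetric]; exact h0
    have hiw := RightAngledDescent.not_both_descents cs hra hij.symm h0' hjw
    exact this j i hij.symm h0' ((h1 i).resolve_left hiw)
  have h0' : M.M j i = 0 := by rw [M.symmetric]; exact h0
  have hi : cs.IsRightDescent w i := (h1 i).resolve_right
    (RightAngledDescent.not_both_descents cs hra hij.symm h0' hj)
  have hT := RightAngledDescent.eq_univ_of_commute cs hra hirr {i, j} ⟨i, by simp⟩ (by
    intro a ha k hk
    simp only [Set.mem_insert_iff, Set.mem_singleton_iff, not_or] at ha hk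
    rcases ha with rfl | rfl
    · exact RightAngledDescent.eq_two_of_cover cs hra (fun k => (h1 k).symm)
        (fun i k => (hs i k).symm) hij.symm h0' hi hk.2 hk.1
    · exact RightAngledDescent.eq_two_of_cover cs hra h1 hs hij h0 hj hk.1 hk.2)
  obtain ⟨e⟩ := RightAngledDescent.nonempty_equiv_dihedral cs hra hij h0 (fun k => by
    have : k ∈ ({i, j} : Set B) := hT ▸ Set.mem_univ k
    simpa using this)
  exact hdih.false e
end
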